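/- arXiv:2502.17809 — 10 statements merged into one kernel-verified Lean document; each statement's English description precedes it below -/
import Mathlib

section
/- For every number of products m ≥ 1 and every value distribution f on ℝ_{≥0}^m with finite support, there exist a coarse horizontal disclosure σ with finite signal space S and a price p ∈ ℝ_{≥0} with p ≥ (1/2)·E[max_{i∈[m]} v_i] such that for every signal s with r(s) > 0 one has max_{i∈[m]} ν_i(s) ≥ p. Consequently, the uniform pricing mechanism that posts price p on every product sells a product with probability one, and its revenue p is at least half of the optimal welfare E[max_i v_i], hence at least half of the revenue of any IC-IR mechanism. -/
open Finset

noncomputable section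

namespace Screening

variable {m : ℕ} {ι : Type}

/-- The ex-ante probability of signal `s` under information structure `σ`. -/
def sigR (V : Finset (Fin m → ℝ)) (f : (Fin m → ℝ) → ℝ)
    (σ : (Fin m → ℝ) → ι → ℝ) (s : ι) : ℝ :=
  ∑ v ∈ V, f v * σ v s

/-- The posterior mean value of product `i` upon receiving signal `s`. -/
def post (V : Finset (Fin m → ℝ)) (f : (Fin m → ℝ) → ℝ)
    (σ : (Fin m → ℝ) → ι → ℝ) (s : ι) (i : Fin m) : ℝ :=
  (∑ v ∈ V, f v * σ v s * v i) / sigR V f σ s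

/-- `σ` is an information structure with finite signal space `S`. -/
def IsInfo (V : Finset (Fin m → ℝ)) (S : Finset ι)
    (σ : (Fin m → ℝ) → ι → ℝ) : Prop :=
  ∀ v ∈ V, (∀ s, 0 ≤ σ v s) ∧ (∀ s, s ∉ S → σ v s = 0) ∧ (∑ s ∈ S, σ v s = 1)

/-- `x` is a feasible (random, unit-demand) allocation rule on `S`. -/
def IsAlloc (S : Finset ι) (x : ι → Fin m → ℝ) : Prop :=
  ∀ s ∈ S, (∀ i, 0 ≤ x s i) ∧ (∀ i, x s i ≤ 1) ∧ (∑ i, x s i ≤ 1)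

/-- Incentive compatibility. -/
def IC (V : Finset (Fin m → ℝ)) (f : (Fin m → ℝ) → ℝ) (S : Finset ι)
    (σ : (Fin m → ℝ) → ι → ℝ) (x : ι → Fin m → ℝ) (p : ι → ℝ) : Prop :=
  ∀ s ∈ S, 0 < sigR V f σ s → ∀ s' ∈ S,
    (∑ i, post V f σ s i * x s' i) - p s' ≤ (∑ i, post V f σ s i * x s i) - p s

/-- Individual rationality. -/
def IR (V : Finset (Fin m → ℝ)) (f : (Fin m → ℝ) → ℝ) (S : Finset ι)
    (σ : (Fin m → ℝ) → ι → ℝ) (x : ι → Fin m → ℝ) (p : ι → ℝ) : Prop :=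
  ∀ s ∈ S, 0 < sigR V f σ s → 0 ≤ (∑ i, post V f σ s i * x s i) - p s

/-- Expected revenue of a mechanism. -/
def Rev (V : Finset (Fin m → ℝ)) (f : (Fin m → ℝ) → ℝ) (S : Finset ι)
    (σ : (Fin m → ℝ) → ι → ℝ) (p : ι → ℝ) : ℝ :=
  ∑ s ∈ S, sigR V f σ s * p s

/-- Nonemptiness of `Fin m` as a finset, given `0 < m`. -/
lemma univNe (hm : 0 < m) : (univ : Finset (Fin m)).Nonempty :=
  univ_nonempty_iff.mpr (Fin.pos_iff_nonempty.mp hm)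

/-- The maximum value `max_i v_i`. -/
def vmax (hm : 0 < m) (v : Fin m → ℝ) : ℝ :=
  univ.sup' (univNe hm) v

/-- The smallest-index maximizing coordinate of `v`. -/
def istar (hm : 0 < m) (v : Fin m → ℝ) : Fin m :=
  (univ.filter (fun i => ∀ j, v j ≤ v i)).min' (by
    obtain ⟨i, -, hi⟩ := Finset.exists_max_image (univ : Finset (Fin m)) v (univNe hm)
    exact ⟨i, mem_filter.mpr ⟨mem_univ _, fun j => hi j (mem_univ _)⟩⟩)

/-- The probability that product `i` is the (selected) highest-value product. -/
def probTop (V : Finset (Fin m → ℝ)) (f : (Fin m → ℝ) → ℝ)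
    (top : (Fin m → ℝ) → Fin m) (i : Fin m) : ℝ :=
  ∑ v ∈ V.filter (fun v => top v = i), f v

/-- The posterior mean value of product `j` conditional on `i` being the highest-value
product (i.e. conditional on the horizontal-disclosure signal `i`). -/
def condMean (V : Finset (Fin m → ℝ)) (f : (Fin m → ℝ) → ℝ)
    (top : (Fin m → ℝ) → Fin m) (i j : Fin m) : ℝ :=
  (∑ v ∈ V.filter (fun v => top v = i), f v * v j) / probTop V f top i



lemma istar_spec {m : ℕ} (hm : 0 < m) (v : Fin m → ℝ) (j : Fin m) : v j ≤ v (istar hm v) := by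
  have h : istar hm v ∈ (univ.filter (fun i => ∀ j, v j ≤ v i)) := Finset.min'_mem _ _
  exact (mem_filter.mp h).2 j

lemma vmax_eq {m : ℕ} (hm : 0 < m) (v : Fin m → ℝ) : vmax hm v = v (istar hm v) := by
  apply le_antisymm
  · exact Finset.sup'_le _ _ (fun j _ => istar_spec hm v j)
  · exact Finset.le_sup' v (mem_univ _)

lemma le_vmax {m : ℕ} (hm : 0 < m) (v : Fin m → ℝ) (j : Fin m) : v j ≤ vmax hm v :=
  Finset.le_sup' v (mem_univ _)

/-- Revenue of an individually rational mechanism is at most the optimal welfare. -/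
lemma rev_le {m : ℕ} (hm : 0 < m) (V : Finset (Fin m → ℝ)) (f : (Fin m → ℝ) → ℝ)
    (hfpos : ∀ v ∈ V, 0 < f v) (hnn : ∀ v ∈ V, ∀ i, 0 ≤ v i)
    (κ : Type) (S' : Finset κ) (σ' : (Fin m → ℝ) → κ → ℝ)
    (x : κ → Fin m → ℝ) (q : κ → ℝ)
    (hI : IsInfo V S' σ') (hA : IsAlloc S' x) (hIR : IR V f S' σ' x q) :
    Rev V f S' σ' q ≤ ∑ v ∈ V, f v * vmax hm v := by
  have hvm : ∀ v ∈ V, 0 ≤ vmax hm v := fun v hv =>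
    (hnn v hv (istar hm v)).trans (le_vmax hm v _)
  have key : ∀ s ∈ S', sigR V f σ' s * q s ≤ ∑ v ∈ V, f v * σ' v s * vmax hm v := by
    intro s hs
    have hn : 0 ≤ sigR V f σ' s :=
      Finset.sum_nonneg fun v hv => mul_nonneg (hfpos v hv).le ((hI v hv).1 s)
    rcases hn.eq_or_lt with h0 | h0
    · rw [← h0, zero_mul]
      exact Finset.sum_nonneg fun v hv =>
        mul_nonneg (mul_nonneg (hfpos v hv).le ((hI v hv).1 s)) (hvm v hv)
    · have h1 := hIR s hs h0
      have h2 : sigR V f σ' s * q s ≤ sigR V f σ' s * ∑ i, post V f σ' s i * x s i :=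
        mul_le_mul_of_nonneg_left (by linarith) hn
      refine h2.trans ?_
      have h3 : sigR V f σ' s * ∑ i, post V f σ' s i * x s i
          = ∑ v ∈ V, f v * σ' v s * ∑ i, v i * x s i := by
        simp_rw [Finset.mul_sum]
        rw [Finset.sum_comm]
        refine Finset.sum_congr rfl fun i _ => ?_
        have : sigR V f σ' s * post V f σ' s i = ∑ v ∈ V, f v * σ' v s * v i := by
          unfold post
          field_simp
        rw [← mul_assoc, this, Finset.sum_mul]
        exact Finset.sum_congr rfl fun v _ => by ring
      rw [h3]
      refine Finset.sum_le_sum fun v hv => ?_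
      refine mul_le_mul_of_nonneg_left ?_ (mul_nonneg (hfpos v hv).le ((hI v hv).1 s))
      calc ∑ i, v i * x s i ≤ ∑ i, vmax hm v * x s i :=
            Finset.sum_le_sum fun i _ =>
              mul_le_mul_of_nonneg_right (le_vmax hm v i) ((hA s hs).1 i)
        _ = vmax hm v * ∑ i, x s i := by rw [Finset.mul_sum]
        _ ≤ vmax hm v * 1 := mul_le_mul_of_nonneg_left (hA s hs).2.2 (hvm v hv)
        _ = vmax hm v := mul_one _
  calc Rev V f S' σ' q ≤ ∑ s ∈ S', ∑ v ∈ V, f v * σ' v s * vmax hm v :=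
        Finset.sum_le_sum key
    _ = ∑ v ∈ V, f v * vmax hm v := by
        rw [Finset.sum_comm]
        refine Finset.sum_congr rfl fun v hv => ?_
        rw [← Finset.sum_mul, ← Finset.mul_sum, (hI v hv).2.2, mul_one]

/-- uniform pricing with a coarse horizontal disclosure guarantees half of
the optimal welfare, hence half of the revenue of any IC-IR mechanism. -/
theorem uniform_pricing_half_of_optimal (m : ℕ) (hm : 0 < m)
    (V : Finset (Fin m → ℝ)) (f : (Fin m → ℝ) → ℝ)
    (hV : V.Nonempty)
    (hfpos : ∀ v ∈ V, 0 < f v)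
    (hfzero : ∀ v, v ∉ V → f v = 0)
    (hsum : ∑ v ∈ V, f v = 1)
    (hnn : ∀ v ∈ V, ∀ i, 0 ≤ v i) :
    ∃ (S : Finset (Finset (Fin m))) (τ : Fin m → Finset (Fin m) → ℝ) (p : ℝ),
      -- the signals are nonempty subsets of the set of products
      (∀ s ∈ S, s.Nonempty) ∧
      -- each τ i is a probability distribution over S
      (∀ i : Fin m, (∀ s, 0 ≤ τ i s) ∧ (∀ s, s ∉ S → τ i s = 0) ∧ (∑ s ∈ S, τ i s = 1)) ∧
      -- i belongs to every signal in the support of τ i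
      (∀ i : Fin m, ∀ s, 0 < τ i s → i ∈ s) ∧
      -- the price is nonnegative and at least half of the optimal welfare E[max_i v_i]
      0 ≤ p ∧
      (1 / 2) * (∑ v ∈ V, f v * vmax hm v) ≤ p ∧
      -- under the coarse horizontal disclosure σ(v) = τ(i*(v)), every signal of positive
      -- probability leads to a purchase at the uniform price p:  max_i ν_i(s) ≥ p
      (∀ s ∈ S, 0 < sigR V f (fun v => τ (istar hm v)) s →
        p ≤ univ.sup' (univNe hm) (post V f (fun v => τ (istar hm v)) s)) ∧
      -- hence the revenue p is at least half of the revenue of any IC-IR mechanism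
      (∀ (κ : Type) (S' : Finset κ) (σ' : (Fin m → ℝ) → κ → ℝ)
          (x : κ → Fin m → ℝ) (q : κ → ℝ),
          IsInfo V S' σ' → IsAlloc S' x → IC V f S' σ' x q → IR V f S' σ' x q →
          Rev V f S' σ' q ≤ 2 * p) := by
  classical
  set W : ℝ := ∑ v ∈ V, f v * vmax hm v with hW
  set p : ℝ := W / 2 with hp
  have hW0 : 0 ≤ W := Finset.sum_nonneg fun v hv =>
    mul_nonneg (hfpos v hv).le ((hnn v hv (istar hm v)).trans (le_vmax hm v _))
  have hp0 : 0 ≤ p := by positivity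
  -- probabilities and partial welfare of each product
  let Q : Fin m → ℝ := fun j => ∑ v ∈ V, f v * (if istar hm v = j then 1 else 0)
  let A : Fin m → ℝ := fun j => ∑ v ∈ V, f v * (if istar hm v = j then 1 else 0) * v j
  have hQ0 : ∀ j, 0 ≤ Q j := fun j => Finset.sum_nonneg fun v hv =>
    mul_nonneg (hfpos v hv).le (by split_ifs <;> norm_num)
  have hQ1 : ∑ j, Q j = 1 := by
    simp only [Q]
    rw [Finset.sum_comm]
    refine Eq.trans ?_ hsum
    refine Finset.sum_congr rfl fun v _ => ?_
    simp
  have hA1 : ∑ j, A j = W := by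
    simp only [A]
    rw [Finset.sum_comm, hW]
    refine Finset.sum_congr rfl fun v _ => ?_
    rw [vmax_eq]
    simp
  let H : Finset (Fin m) := univ.filter fun j => p * Q j ≤ A j
  let L : Finset (Fin m) := univ.filter fun j => ¬ p * Q j ≤ A j
  have hHmem : ∀ j, j ∈ H ↔ p * Q j ≤ A j := fun j => by simp [H]
  have hLmem : ∀ j, j ∈ L ↔ j ∉ H := fun j => by simp [H, L]
  have splitHL : ∀ g : Fin m → ℝ, ∑ j ∈ H, g j + ∑ j ∈ L, g j = ∑ j, g j := fun g =>
    Finset.sum_filter_add_sum_filter_not univ _ g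
  let QL : ℝ := ∑ j ∈ L, Q j
  let C : ℝ := ∑ j ∈ H, (A j - p * Q j)
  have hc0 : ∀ j ∈ H, 0 ≤ A j - p * Q j := fun j hj => by
    have := (hHmem j).1 hj
    linarith
  have hC0 : 0 ≤ C := Finset.sum_nonneg hc0
  have hQL0 : 0 ≤ QL := Finset.sum_nonneg fun j _ => hQ0 j
  have hQH0 : 0 ≤ ∑ j ∈ H, Q j := Finset.sum_nonneg fun j _ => hQ0 j
  -- total slack of the high products suffices
  have hCge : p * QL ≤ C := by
    have h1 := splitHL Q
    have h2 := splitHL A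
    rw [hQ1] at h1
    rw [hA1] at h2
    have h3 : ∑ j ∈ L, A j ≤ p * QL := by
      simp only [QL]
      rw [Finset.mul_sum]
      refine Finset.sum_le_sum fun j hj => ?_
      have := (hLmem j).1 hj
      rw [hHmem] at this
      linarith
    have h4 : C = ∑ j ∈ H, A j - p * ∑ j ∈ H, Q j := by
      simp only [C]
      rw [Finset.sum_sub_distrib, Finset.mul_sum]
    have h5 : QL = 1 - ∑ j ∈ H, Q j := by
      simp only [QL]
      linarith
    have h6 : p * QL ≤ p := by nlinarith
    have h7 : p * QL = p - p * ∑ j ∈ H, Q j := by rw [h5]; ring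
    linarith
  have hCpos : L.Nonempty → 0 < C := by
    rintro ⟨j, hj⟩
    have h1 := (hLmem j).1 hj
    rw [hHmem, not_le] at h1
    have hAj : 0 ≤ A j := Finset.sum_nonneg fun v hv =>
      mul_nonneg (mul_nonneg (hfpos v hv).le (by split_ifs <;> norm_num)) (hnn v hv j)
    have h2 : Q j ≤ QL := Finset.single_le_sum (f := Q) (fun j _ => hQ0 j) hj
    have h3 : p * Q j ≤ p * QL := mul_le_mul_of_nonneg_left h2 hp0
    linarith
  let w : Fin m → ℝ := fun k => (A k - p * Q k) / C
  have hw0 : ∀ k ∈ H, 0 ≤ w k := fun k hk => div_nonneg (hc0 k hk) hC0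
  let M : Fin m → Fin m → ℝ := fun j k =>
    (if j = k then 1 else 0) + (if j ∈ L then w k else 0)
  have hM0 : ∀ j, ∀ k ∈ H, 0 ≤ M j k := fun j k hk => by
    have := hw0 k hk
    simp only [M]
    split_ifs <;> linarith
  have hM1 : ∀ j, ∑ k ∈ H, M j k = 1 := by
    intro j
    simp only [M]
    rw [Finset.sum_add_distrib, Finset.sum_ite_eq]
    by_cases hj : j ∈ H
    · have hjL : j ∉ L := fun h => (hLmem j).1 h hj
      simp [hj, hjL]
    · have hjL : j ∈ L := (hLmem j).2 hj
      have hC := hCpos ⟨j, hjL⟩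
      simp only [hj, hjL, if_true, if_false, zero_add, w]
      rw [← Finset.sum_div]
      exact div_self hC.ne'
  let τ : Fin m → Finset (Fin m) → ℝ := fun j s =>
    ∑ k ∈ H, if insert k L = s then M j k else 0
  have hinj : ∀ k ∈ H, ∀ k' ∈ H, insert k L = insert k' L → k = k' := by
    intro k hk k' _ h
    have h1 : k ∈ insert k' L := h ▸ Finset.mem_insert_self k L
    rcases Finset.mem_insert.1 h1 with h2 | h2
    · exact h2
    · exact absurd hk ((hLmem k).1 h2)
  have hτ : ∀ j, ∀ k ∈ H, τ j (insert k L) = M j k := by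
    intro j k hk
    simp only [τ]
    rw [Finset.sum_eq_single_of_mem k hk, if_pos rfl]
    intro b hb hbk
    exact if_neg fun h => hbk (hinj b hb k hk h)
  refine ⟨H.image fun k => insert k L, τ, p, ?_, ?_, ?_, hp0, ?_, ?_, ?_⟩
  · intro s hs
    obtain ⟨k, _, rfl⟩ := Finset.mem_image.1 hs
    exact ⟨k, Finset.mem_insert_self k L⟩
  · intro j
    refine ⟨fun s => Finset.sum_nonneg fun k hk => ?_, fun s hs => ?_, ?_⟩
    · split_ifs
      · exact hM0 j k hk
      · exact le_rfl
    · refine Finset.sum_eq_zero fun k hk => if_neg fun h => hs ?_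
      exact Finset.mem_image.2 ⟨k, hk, h⟩
    · rw [Finset.sum_image (fun k hk k' hk' h => hinj k hk k' hk' h), ← hM1 j]
      exact Finset.sum_congr rfl fun k hk => hτ j k hk
  · intro j s hs
    obtain ⟨k, hk, hne⟩ := Finset.exists_ne_zero_of_sum_ne_zero hs.ne'
    have h1 : insert k L = s := by
      by_contra h
      exact hne (if_neg h)
    rw [if_pos h1] at hne
    rw [← h1, Finset.mem_insert]
    by_contra h
    push Not at h
    exact hne (by simp [M, h.1, h.2])
  · linarith
  · intro s hs hpos
    obtain ⟨k, hk, rfl⟩ := Finset.mem_image.1 hs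
    refine le_trans ?_ (Finset.le_sup' _ (mem_univ k))
    have hsig : sigR V f (fun v => τ (istar hm v)) (insert k L) = Q k + w k * QL := by
      simp only [sigR, Q, QL]
      rw [Finset.sum_comm, Finset.mul_sum, ← Finset.sum_add_distrib]
      refine Finset.sum_congr rfl fun v _ => ?_
      rw [hτ _ k hk, ← Finset.mul_sum, Finset.sum_ite_eq]
      simp only [M]
      split_ifs <;> ring
    have hnum : A k ≤ ∑ v ∈ V, f v * τ (istar hm v) (insert k L) * v k := by
      refine Finset.sum_le_sum fun v hv => ?_
      refine mul_le_mul_of_nonneg_right ?_ (hnn v hv k)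
      refine mul_le_mul_of_nonneg_left ?_ (hfpos v hv).le
      rw [hτ _ k hk]
      have := hw0 k hk
      simp only [M]
      split_ifs <;> linarith
    unfold post
    rw [le_div_iff₀ hpos]
    refine le_trans ?_ hnum
    rw [hsig]
    have hwk : w k * (p * QL) ≤ A k - p * Q k := by
      rcases hC0.eq_or_lt with h | h
      · simp only [w]
        rw [← h, div_zero, zero_mul]
        exact hc0 k hk
      · calc w k * (p * QL) ≤ w k * C := mul_le_mul_of_nonneg_left hCge (hw0 k hk)
          _ = A k - p * Q k := div_mul_cancel₀ _ h.ne'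
    linarith
  · intro κ S' σ' x q hI hA _ hIR
    have := rev_le hm V f hfpos hnn κ S' σ' x q hI hA hIR
    linarith


end Screening
end
end

section
/- Fix ε ∈ (0,1), m = 2 products, and the value distribution with f(0,1) = 1−ε and f(1/ε, 1) = ε. (a) For every information structure σ with finite signal space S and every uniform price p ≥ 0, the revenue of the induced uniform pricing mechanism — in which at each signal s with r(s) > 0 the buyer purchases a product maximizing ν_i(s) and pays p if max_i ν_i(s) ≥ p, and purchases nothing otherwise — satisfies Σ_{s : max_i ν_i(s) ≥ p} r(s)·p ≤ 1. (b) There is an IC-IR mechanism with finite signal space whose revenue equals 2 − ε (full disclosure S = V, σ(v) = δ_v, with the buyer of type (1/ε,1) buying product 1 at price 1/ε and the buyer of type (0,1) buying product 2 at price 1). Hence uniform pricing mechanisms cannot guarantee more than a 1/(2−ε) fraction of the optimal revenue on this instance. -/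
open Finset

noncomputable section

namespace Screening

variable {m : ℕ} {ι : Type}

/-- The low type `(0, 1)`. -/
def vLow : Fin 2 → ℝ := ![0, 1]

/-- The high type `(1/ε, 1)`. -/
def vHigh (ε : ℝ) : Fin 2 → ℝ := ![ε⁻¹, 1]

/-- The tight-example distribution: `f(0,1) = 1 − ε`, `f(1/ε,1) = ε`. -/
def fTight (ε : ℝ) : (Fin 2 → ℝ) → ℝ :=
  fun v => if v = vLow then 1 - ε else if v = vHigh ε then ε else 0

/-- Full-disclosure information structure: the signal is the value profile itself. -/
def fullDisc : (Fin 2 → ℝ) → (Fin 2 → ℝ) → ℝ := fun v s => if s = v then 1 else 0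

/-- The two types differ. -/
lemma low_ne_high (ε : ℝ) (h : 0 < ε) : vLow ≠ vHigh ε := by
  intro e
  have := congrFun e 0
  simp [vLow, vHigh] at this
  exact h.ne this

lemma sum_pair_types (ε : ℝ) (h : 0 < ε) (g : (Fin 2 → ℝ) → ℝ) :
    ∑ v ∈ ({vLow, vHigh ε} : Finset (Fin 2 → ℝ)), g v = g vLow + g (vHigh ε) :=
  Finset.sum_pair (low_ne_high ε h)

lemma fTight_low (ε : ℝ) : fTight ε vLow = 1 - ε := by simp [fTight]

lemma fTight_high (ε : ℝ) (h : 0 < ε) : fTight ε (vHigh ε) = ε := by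
  simp [fTight, (low_ne_high ε h).symm]

lemma sigR_tight {ι : Type} (ε : ℝ) (h : 0 < ε) (σ : (Fin 2 → ℝ) → ι → ℝ) (s : ι) :
    sigR {vLow, vHigh ε} (fTight ε) σ s = (1 - ε) * σ vLow s + ε * σ (vHigh ε) s := by
  rw [sigR, sum_pair_types ε h, fTight_low, fTight_high ε h]

lemma post_tight_zero {ι : Type} (ε : ℝ) (h : 0 < ε) (σ : (Fin 2 → ℝ) → ι → ℝ) (s : ι) :
    post {vLow, vHigh ε} (fTight ε) σ s 0 =
      σ (vHigh ε) s / ((1 - ε) * σ vLow s + ε * σ (vHigh ε) s) := by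
  rw [post, sum_pair_types ε h, fTight_low, fTight_high ε h, sigR_tight ε h]
  congr 1
  simp [vLow]
  simp [vHigh]
  field_simp

lemma post_tight_one {ι : Type} (ε : ℝ) (h : 0 < ε) (σ : (Fin 2 → ℝ) → ι → ℝ) (s : ι) :
    post {vLow, vHigh ε} (fTight ε) σ s 1 =
      ((1 - ε) * σ vLow s + ε * σ (vHigh ε) s) /
        ((1 - ε) * σ vLow s + ε * σ (vHigh ε) s) := by
  rw [post, sum_pair_types ε h, fTight_low, fTight_high ε h, sigR_tight ε h]
  congr 1
  simp [vLow, vHigh]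

/-- tightness of the factor 2 for uniform pricing. -/
theorem uniform_pricing_tight_example (ε : ℝ) (hε0 : 0 < ε) (hε1 : ε < 1) :
    -- (a) every uniform pricing mechanism, under any information structure, has revenue ≤ 1
    (∀ (ι : Type) (S : Finset ι) (σ : (Fin 2 → ℝ) → ι → ℝ) (p : ℝ),
      IsInfo {vLow, vHigh ε} S σ → 0 ≤ p →
      ∑ s ∈ S.filter (fun s =>
          p ≤ univ.sup' (univNe (by norm_num)) (post {vLow, vHigh ε} (fTight ε) σ s)),
        sigR {vLow, vHigh ε} (fTight ε) σ s * p ≤ 1) ∧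
    -- (b) the full-disclosure pricing mechanism selling product 1 at price 1/ε to the
    -- high type and product 2 at price 1 to the low type is IC-IR with revenue 2 − ε
    (IsInfo {vLow, vHigh ε} {vLow, vHigh ε} fullDisc ∧
      IsAlloc {vLow, vHigh ε} (fun s => if s = vHigh ε then ![1, 0] else ![0, 1]) ∧
      IC {vLow, vHigh ε} (fTight ε) {vLow, vHigh ε} fullDisc
        (fun s => if s = vHigh ε then ![1, 0] else ![0, 1])
        (fun s => if s = vHigh ε then ε⁻¹ else 1) ∧
      IR {vLow, vHigh ε} (fTight ε) {vLow, vHigh ε} fullDisc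
        (fun s => if s = vHigh ε then ![1, 0] else ![0, 1])
        (fun s => if s = vHigh ε then ε⁻¹ else 1) ∧
      Rev {vLow, vHigh ε} (fTight ε) {vLow, vHigh ε} fullDisc
        (fun s => if s = vHigh ε then ε⁻¹ else 1) = 2 - ε) := by
  have hne := low_ne_high ε hε0
  have hne' := hne.symm
  have h1ε : 0 < 1 - ε := by linarith
  refine ⟨?_, ?_, ?_, ?_, ?_, ?_⟩
  · intro ι S σ p hσ hp
    obtain ⟨ha0, -, ha1⟩ := hσ vLow (by simp)
    obtain ⟨hb0, -, hb1⟩ := hσ (vHigh ε) (by simp)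
    have hr0 : ∀ s, 0 ≤ (1 - ε) * σ vLow s + ε * σ (vHigh ε) s := fun s =>
      add_nonneg (mul_nonneg h1ε.le (ha0 s)) (mul_nonneg hε0.le (hb0 s))
    by_cases hp1 : p ≤ 1
    · calc _ ≤ ∑ s ∈ S, ((1 - ε) * σ vLow s + ε * σ (vHigh ε) s) := by
            refine (Finset.sum_le_sum (fun s _ => ?_)).trans
              (Finset.sum_le_sum_of_subset_of_nonneg (Finset.filter_subset _ S)
                (fun s _ _ => hr0 s))
            rw [sigR_tight ε hε0]
            exact mul_le_of_le_one_right (hr0 s) hp1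
        _ = 1 := by
            rw [Finset.sum_add_distrib, ← Finset.mul_sum, ← Finset.mul_sum, ha1, hb1]
            ring
        _ ≤ 1 := le_rfl
    · push Not at hp1
      calc _ ≤ ∑ s ∈ S, σ (vHigh ε) s := by
            refine (Finset.sum_le_sum (fun s hs => ?_)).trans
              (Finset.sum_le_sum_of_subset_of_nonneg (Finset.filter_subset _ S)
                (fun s _ _ => hb0 s))
            rw [sigR_tight ε hε0]
            have h := (Finset.mem_filter.mp hs).2
            rw [Finset.le_sup'_iff] at h
            obtain ⟨i, -, hi⟩ := h
            rcases (hr0 s).eq_or_lt with h0 | h0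
            · rw [← h0, zero_mul]
              exact hb0 s
            · fin_cases i
              · change p ≤ post _ _ σ s 0 at hi
                rw [post_tight_zero ε hε0, le_div_iff₀ h0] at hi
                linarith
              · change p ≤ post _ _ σ s 1 at hi
                rw [post_tight_one ε hε0, div_self h0.ne'] at hi
                linarith
        _ ≤ 1 := hb1.le
  · intro v hv
    refine ⟨fun s => ?_, fun s hs => ?_, ?_⟩
    · unfold fullDisc
      split_ifs <;> norm_num
    · have : s ≠ v := fun e => hs (e ▸ hv)
      simp [fullDisc, this]
    · simp only [fullDisc]
      rw [Finset.sum_ite_eq' _ v, if_pos hv]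
  · intro s _
    by_cases h : s = vHigh ε <;> simp [h, Fin.forall_fin_two]
  · intro s hs _ s' hs'
    simp only [Finset.mem_insert, Finset.mem_singleton] at hs hs'
    rw [Fin.sum_univ_two, Fin.sum_univ_two, post_tight_zero ε hε0, post_tight_one ε hε0]
    rcases hs with rfl | rfl <;> rcases hs' with rfl | rfl <;>
      simp [fullDisc, hne, hne', h1ε.ne', hε0.ne', hε0.le]
  · intro s hs _
    simp only [Finset.mem_insert, Finset.mem_singleton] at hs
    rw [Fin.sum_univ_two, post_tight_zero ε hε0, post_tight_one ε hε0]
    rcases hs with rfl | rfl <;>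
      simp [fullDisc, hne, hne', h1ε.ne', hε0.ne']
  · rw [Rev, sum_pair_types ε hε0, sigR_tight ε hε0, sigR_tight ε hε0]
    simp [fullDisc, hne, hne', hε0.ne']
    ring

end Screening
end
end

section
/- Let (v1, v2) be a random vector with finite support in ℝ_{≥0}², let A = {v1 ≥ v2}, q1 = P(A), q2 = 1 − q1, and suppose q1 > 0 and q2 > 0. Set a = E[v1 | A], b = E[v1 | not A], c = E[v2 | not A], and suppose (without loss of generality) that c ≥ a. Then max{ E[v1], E[v2], q1·a + q2·(c − max(0, b − a)) } ≥ (2/3)·E[max(v1, v2)], where E[max(v1, v2)] = q1·a + q2·c. The three quantities in the maximum are the revenues of three pricing mechanisms: (M1) revealing no information and selling only product 1 at price E[v1]; (M2) revealing no information and selling only product 2 at price E[v2]; (M3) horizontal disclosure (revealing the event A or its complement) with prices p1 = a on product 1 and p2 = c − max(0, b − a) on product 2, under which the buyer purchases product 1 at signal A and product 2 at the complementary signal. Hence with two products some pricing mechanism with (coarse) horizontal disclosure attains at least 2/3 of the optimal welfare. -/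
open Finset

noncomputable section

namespace Screening

/-- with two products, the best of the three pricing mechanisms
(M1: no information, sell product 1 at its prior mean; M2: no information, sell
product 2 at its prior mean; M3: horizontal disclosure with prices `a` and
`c − max 0 (b − a)`) obtains at least 2/3 of the optimal welfare
`E[max(v1,v2)] = q1·a + q2·c`. -/
theorem two_product_two_thirds
    (V : Finset (ℝ × ℝ)) (f : ℝ × ℝ → ℝ)
    (hV : V.Nonempty)
    (hfpos : ∀ v ∈ V, 0 < f v)
    (hnn : ∀ v ∈ V, 0 ≤ v.1 ∧ 0 ≤ v.2)
    (hsum : ∑ v ∈ V, f v = 1)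
    (q1 q2 a b c : ℝ)
    -- q1 = P(v1 ≥ v2), q2 = 1 − q1, both positive
    (hq1 : q1 = ∑ v ∈ V.filter (fun v => v.2 ≤ v.1), f v)
    (hq2 : q2 = 1 - q1)
    (hq1pos : 0 < q1) (hq2pos : 0 < q2)
    -- a = E[v1 | v1 ≥ v2], b = E[v1 | v1 < v2], c = E[v2 | v1 < v2]
    (ha : a = (∑ v ∈ V.filter (fun v => v.2 ≤ v.1), f v * v.1) / q1)
    (hb : b = (∑ v ∈ V.filter (fun v => ¬ v.2 ≤ v.1), f v * v.1) / q2)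
    (hc : c = (∑ v ∈ V.filter (fun v => ¬ v.2 ≤ v.1), f v * v.2) / q2)
    -- without loss of generality, c ≥ a
    (hca : a ≤ c) :
    (∑ v ∈ V, f v * max v.1 v.2 = q1 * a + q2 * c) ∧
    (2 / 3) * (∑ v ∈ V, f v * max v.1 v.2) ≤
      max (∑ v ∈ V, f v * v.1)
        (max (∑ v ∈ V, f v * v.2) (q1 * a + q2 * (c - max 0 (b - a)))) := by
  have hs := fun g : ℝ × ℝ → ℝ =>
    (Finset.sum_filter_add_sum_filter_not V (fun v : ℝ × ℝ => v.2 ≤ v.1) g).symm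
  have ha' : ∑ v ∈ V.filter (fun v => v.2 ≤ v.1), f v * v.1 = q1 * a := by
    rw [ha]; field_simp
  have hb' : ∑ v ∈ V.filter (fun v => ¬ v.2 ≤ v.1), f v * v.1 = q2 * b := by
    rw [hb]; field_simp
  have hc' : ∑ v ∈ V.filter (fun v => ¬ v.2 ≤ v.1), f v * v.2 = q2 * c := by
    rw [hc]; field_simp
  have hW : ∑ v ∈ V, f v * max v.1 v.2 = q1 * a + q2 * c := by
    rw [hs, ← ha', ← hc']
    congr 1
    · refine Finset.sum_congr rfl fun v hv => ?_
      rw [max_eq_left (Finset.mem_filter.mp hv).2]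
    · refine Finset.sum_congr rfl fun v hv => ?_
      rw [max_eq_right (le_of_not_ge (Finset.mem_filter.mp hv).2)]
  have h1 : ∑ v ∈ V, f v * v.1 = q1 * a + q2 * b := by rw [hs, ha', hb']
  have h2 : q2 * c ≤ ∑ v ∈ V, f v * v.2 := by
    rw [hs, hc']
    have : 0 ≤ ∑ v ∈ V.filter (fun v => v.2 ≤ v.1), f v * v.2 :=
      Finset.sum_nonneg fun v hv =>
        mul_nonneg (hfpos v (Finset.mem_filter.mp hv).1).le (hnn v (Finset.mem_filter.mp hv).1).2
    linarith
  have hq1a : 0 ≤ q1 * a := by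
    rw [← ha']
    exact Finset.sum_nonneg fun v hv =>
      mul_nonneg (hfpos v (Finset.mem_filter.mp hv).1).le (hnn v (Finset.mem_filter.mp hv).1).1
  have ha0 : 0 ≤ a := nonneg_of_mul_nonneg_right hq1a hq1pos
  have hq2a : 0 ≤ q2 * a := mul_nonneg hq2pos.le ha0
  have hq2c : 0 ≤ q2 * c := mul_nonneg hq2pos.le (ha0.trans hca)
  refine ⟨hW, ?_⟩
  rw [hW, h1]
  by_contra hlt
  rw [not_le, max_lt_iff, max_lt_iff] at hlt
  obtain ⟨l1, l2, l3⟩ := hlt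
  rcases le_total b a with hba | hba
  · rw [max_eq_left (by linarith)] at l3
    linarith
  · rw [max_eq_right (by linarith)] at l3
    linarith

end Screening
end
end

section
/- Fix ε ∈ (0,1), m = 2 products, and the value distribution with f(1, 0) = 1 − ε and f(1/ε, 2/ε) = ε. Then the optimal welfare equals E[max(v1,v2)] = 3 − ε, while every IC-IR mechanism with finite signal space has revenue at most 2 + 2ε. Consequently, for any ε' > 0 there is an instance with two products in which the optimal revenue is at most (2/3 + ε') times the optimal welfare. -/
open Finset

noncomputable section

namespace Screening

variable {m : ℕ} {ι : Type}

/-- The frequent type `(1, 0)`. -/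
def wLow : Fin 2 → ℝ := ![1, 0]

/-- The rare type `(1/ε, 2/ε)`. -/
def wHigh (ε : ℝ) : Fin 2 → ℝ := ![ε⁻¹, 2 * ε⁻¹]

/-- The hardness distribution: `f(1,0) = 1 − ε`, `f(1/ε, 2/ε) = ε`. -/
def fHard (ε : ℝ) : (Fin 2 → ℝ) → ℝ :=
  fun v => if v = wLow then 1 - ε else if v = wHigh ε then ε else 0

lemma wne (ε : ℝ) (h : 0 < ε) : wLow ≠ wHigh ε := by
  intro he
  have := congrFun he 1
  simp [wLow, wHigh] at this
  exact h.ne' this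

lemma sum_pair_hard (ε : ℝ) (h : 0 < ε) (F : (Fin 2 → ℝ) → ℝ) :
    ∑ v ∈ ({wLow, wHigh ε} : Finset (Fin 2 → ℝ)), F v = F wLow + F (wHigh ε) :=
  Finset.sum_pair (wne ε h)

lemma f_low (ε : ℝ) : fHard ε wLow = 1 - ε := by simp [fHard]

lemma f_high (ε : ℝ) (h : 0 < ε) : fHard ε (wHigh ε) = ε := by
  simp [fHard, (wne ε h).symm]

lemma welfare_hard (ε : ℝ) (h : 0 < ε) :
    ∑ v ∈ ({wLow, wHigh ε} : Finset (Fin 2 → ℝ)), fHard ε v * max (v 0) (v 1) = 3 - ε := by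
  rw [sum_pair_hard ε h, f_low, f_high ε h]
  have h1 : 0 < ε⁻¹ := inv_pos.mpr h
  have e1 : max (wLow 0) (wLow 1) = 1 := by simp [wLow]
  have e2 : max (wHigh ε 0) (wHigh ε 1) = 2 * ε⁻¹ := by
    simp only [wHigh, Matrix.cons_val_zero, Matrix.cons_val_one]
    exact max_eq_right (by linarith)
  rw [e1, e2]
  field_simp
  ring

/-- Pointwise bound on the price paid by type `t`, against the menu entry `(y0, y1, py)`
that is optimal for the mean type `t = 1`. -/
lemma price_bound (ε t x0 x1 p y0 y1 py : ℝ) (hε0 : 0 < ε) (ht : 0 ≤ t)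
    (hx0 : 0 ≤ x0) (hx1 : 0 ≤ x1) (hx : x0 + x1 ≤ 1)
    (hy0 : 0 ≤ y0) (hy : y0 + y1 ≤ 1)
    (hIR : 0 ≤ (1 + t * (1 - ε)) * x0 + 2 * t * x1 - p)
    (hIC : (1 + t * (1 - ε)) * y0 + 2 * t * y1 - py ≤ (1 + t * (1 - ε)) * x0 + 2 * t * x1 - p)
    (hopt : (1 + 1 * (1 - ε)) * x0 + 2 * 1 * x1 - p ≤ (1 + 1 * (1 - ε)) * y0 + 2 * 1 * y1 - py)
    (hu : 0 ≤ (1 + 1 * (1 - ε)) * y0 + 2 * 1 * y1 - py) :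
    p ≤ 2 + ε + (2 - ((1 - ε) * y0 + 2 * y1)) * (t - 1) := by
  obtain ⟨g, hg⟩ : ∃ g, g = (1 - ε) * x0 + 2 * x1 := ⟨_, rfl⟩
  obtain ⟨k, hk⟩ : ∃ k, k = (1 - ε) * y0 + 2 * y1 := ⟨_, rfl⟩
  have ex : 0 ≤ ε * x0 := by positivity
  have ey : 0 ≤ ε * y0 := by positivity
  have ex' : ε * x0 ≤ ε := by nlinarith
  have hg2 : x0 ≤ 2 - g := by rw [hg]; nlinarith
  have hg1 : x0 ≤ g + ε := by rw [hg]; nlinarith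
  have hk2 : k ≤ 2 := by rw [hk]; nlinarith
  rw [← hk]
  have hIR' : p ≤ x0 + t * g := by rw [hg]; linarith
  have hIC' : y0 + t * k - py ≤ x0 + t * g - p := by rw [hg, hk]; linarith
  have hopt' : x0 + g - p ≤ y0 + k - py := by rw [hg, hk]; linarith
  have hu' : 0 ≤ y0 + k - py := by rw [hk]; linarith
  rcases le_or_gt 1 t with h1 | h1
  · nlinarith [mul_nonneg (sub_nonneg.mpr h1) (by linarith : 0 ≤ 2 - g)]
  · have hgk : g ≤ k := by
      by_contra hc
      push Not at hc
      nlinarith [mul_pos (sub_pos.mpr h1) (sub_pos.mpr hc)]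
    rcases le_or_gt g 1 with h2 | h2
    · nlinarith [mul_nonneg ht (sub_nonneg.mpr h2),
        mul_nonneg (sub_nonneg.mpr h1.le) (sub_nonneg.mpr hgk)]
    · nlinarith [mul_nonneg (sub_nonneg.mpr h1.le) (by linarith : 0 ≤ g + k - 2)]

lemma sigR_hard (ε : ℝ) (h : 0 < ε) {ι : Type} (σ : (Fin 2 → ℝ) → ι → ℝ) (s : ι) :
    sigR {wLow, wHigh ε} (fHard ε) σ s = (1 - ε) * σ wLow s + ε * σ (wHigh ε) s := by
  rw [sigR, sum_pair_hard ε h, f_low, f_high ε h]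

lemma post0_hard (ε : ℝ) (h : 0 < ε) {ι : Type} (σ : (Fin 2 → ℝ) → ι → ℝ) (s : ι)
    (hr : 0 < sigR {wLow, wHigh ε} (fHard ε) σ s) :
    post {wLow, wHigh ε} (fHard ε) σ s 0 =
      1 + σ (wHigh ε) s / sigR {wLow, wHigh ε} (fHard ε) σ s * (1 - ε) := by
  rw [post, sum_pair_hard ε h, f_low, f_high ε h]
  have e := sigR_hard ε h σ s
  have hw : wLow 0 = 1 := by simp [wLow]
  have hw' : wHigh ε 0 = ε⁻¹ := by simp [wHigh]
  rw [hw, hw', div_eq_iff hr.ne', add_mul, one_mul, mul_right_comm (_ / _), div_mul_cancel₀ _ hr.ne', e]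
  field_simp
  ring

lemma post1_hard (ε : ℝ) (h : 0 < ε) {ι : Type} (σ : (Fin 2 → ℝ) → ι → ℝ) (s : ι) :
    post {wLow, wHigh ε} (fHard ε) σ s 1 =
      2 * (σ (wHigh ε) s / sigR {wLow, wHigh ε} (fHard ε) σ s) := by
  rw [post, sum_pair_hard ε h, f_low, f_high ε h]
  have hw : wLow 1 = 0 := by simp [wLow]
  have hw' : wHigh ε 1 = 2 * ε⁻¹ := by simp [wHigh]
  rw [hw, hw', mul_zero, zero_add, ← mul_div_assoc]
  congr 1
  field_simp

lemma rev_hard (ε : ℝ) (hε0 : 0 < ε) (hε1 : ε < 1) (ι : Type) (S : Finset ι)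
    (σ : (Fin 2 → ℝ) → ι → ℝ) (x : ι → Fin 2 → ℝ) (q : ι → ℝ)
    (hI : IsInfo {wLow, wHigh ε} S σ) (hA : IsAlloc S x)
    (hIC : IC {wLow, wHigh ε} (fHard ε) S σ x q)
    (hIR : IR {wLow, wHigh ε} (fHard ε) S σ x q) :
    Rev {wLow, wHigh ε} (fHard ε) S σ q ≤ 2 + 2 * ε := by
  obtain ⟨a0, -, a1⟩ := hI wLow (by simp)
  obtain ⟨b0, -, b1⟩ := hI (wHigh ε) (by simp)
  set r := sigR {wLow, wHigh ε} (fHard ε) σ with hr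
  have er : ∀ s, r s = (1 - ε) * σ wLow s + ε * σ (wHigh ε) s := sigR_hard ε hε0 σ
  have r0 : ∀ s, 0 ≤ r s := fun s => by
    rw [er]
    exact add_nonneg (mul_nonneg (by linarith) (a0 s)) (mul_nonneg hε0.le (b0 s))
  have r1 : ∑ s ∈ S, r s = 1 := by
    simp only [er, Finset.sum_add_distrib, ← Finset.mul_sum, a1, b1]
    ring
  have rz : ∀ s, r s = 0 → σ (wHigh ε) s = 0 := fun s hs => by
    have h1 := er s
    have h2 := mul_nonneg (by linarith : 0 ≤ 1 - ε) (a0 s)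
    have h3 := mul_nonneg hε0.le (b0 s)
    have h4 : ε * σ (wHigh ε) s = 0 := by linarith
    exact (mul_eq_zero.mp h4).resolve_left hε0.ne'
  obtain ⟨s0, hs0, hr0, ht0⟩ : ∃ s ∈ S, 0 < r s ∧ σ (wHigh ε) s ≤ r s := by
    by_contra hc
    push Not at hc
    obtain ⟨s1, hs1, hp⟩ : ∃ s ∈ S, 0 < r s := by
      apply Finset.exists_lt_of_sum_lt
      simp [r1]
    have : ∑ s ∈ S, r s < ∑ s ∈ S, σ (wHigh ε) s := by
      apply Finset.sum_lt_sum
      · intro s hs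
        rcases (r0 s).lt_or_eq with h | h
        · exact (hc s hs h).le
        · rw [← h]; exact b0 s
      · exact ⟨s1, hs1, hc s1 hs1 hp⟩
    linarith
  -- the best menu entry for the mean type
  obtain ⟨z, hz, hmax⟩ := Finset.exists_max_image S
    (fun s => (1 + 1 * (1 - ε)) * x s 0 + 2 * 1 * x s 1 - q s) ⟨s0, hs0⟩
  simp only [IC, IR, Fin.sum_univ_two] at hIC hIR
  have alloc : ∀ s ∈ S, 0 ≤ x s 0 ∧ 0 ≤ x s 1 ∧ x s 0 + x s 1 ≤ 1 := fun s hs => by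
    obtain ⟨h1, -, h2⟩ := hA s hs
    rw [Fin.sum_univ_two] at h2
    exact ⟨h1 0, h1 1, h2⟩
  have hu : 0 ≤ (1 + 1 * (1 - ε)) * x z 0 + 2 * 1 * x z 1 - q z := by
    refine le_trans ?_ (hmax s0 hs0)
    have h := hIR s0 hs0 hr0
    rw [post0_hard ε hε0 σ s0 hr0, post1_hard ε hε0 σ s0, ← hr] at h
    have ht : σ (wHigh ε) s0 / r s0 ≤ 1 := (div_le_one hr0).mpr ht0
    obtain ⟨h1, h2, -⟩ := alloc s0 hs0
    nlinarith [mul_nonneg (sub_nonneg.mpr ht) (mul_nonneg (by linarith : 0 ≤ 1 - ε) h1),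
      mul_nonneg (sub_nonneg.mpr ht) h2]
  set β := 2 - ((1 - ε) * x z 0 + 2 * x z 1) with hβ
  have key : ∀ s ∈ S, r s * q s ≤ (2 + ε) * r s + β * (σ (wHigh ε) s - r s) := by
    intro s hs
    rcases (r0 s).lt_or_eq with h | h
    · obtain ⟨h1, h2, h3⟩ := alloc s hs
      obtain ⟨k1, k2, k3⟩ := alloc z hz
      have i1 := hIR s hs h
      have i2 := hIC s hs h z hz
      rw [post0_hard ε hε0 σ s h, post1_hard ε hε0 σ s, ← hr] at i1 i2
      have hb := price_bound ε (σ (wHigh ε) s / r s) (x s 0) (x s 1) (q s) (x z 0) (x z 1) (q z)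
        hε0 (div_nonneg (b0 s) h.le) h1 h2 h3 k1 k3 i1 i2 (hmax s hs) hu
      rw [← hβ] at hb
      have hm := mul_le_mul_of_nonneg_left hb h.le
      have e : r s * (σ (wHigh ε) s / r s) = σ (wHigh ε) s := mul_div_cancel₀ _ h.ne'
      calc r s * q s ≤ _ := hm
        _ = (2 + ε) * r s + β * (r s * (σ (wHigh ε) s / r s) - r s) := by ring
        _ = _ := by rw [e]
    · rw [rz s h.symm, ← h]; simp
  have hs := Finset.sum_le_sum key
  rw [Finset.sum_add_distrib, ← Finset.mul_sum, ← Finset.mul_sum, Finset.sum_sub_distrib,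
    r1, b1] at hs
  have : Rev {wLow, wHigh ε} (fHard ε) S σ q = ∑ s ∈ S, r s * q s := rfl
  rw [this]
  linarith

/-- on the instance `f(1,0) = 1 − ε`, `f(1/ε,2/ε) = ε`, the optimal welfare
is `3 − ε` while no IC-IR mechanism earns more than `2 + 2ε`; consequently, for every
`ε' > 0` there is a two-product instance where the optimal revenue is at most
`(2/3 + ε')` times the optimal welfare. -/
theorem two_product_hardness (ε : ℝ) (hε0 : 0 < ε) (hε1 : ε < 1) :
    -- the optimal welfare E[max(v1, v2)] equals 3 − ε
    (∑ v ∈ ({wLow, wHigh ε} : Finset (Fin 2 → ℝ)), fHard ε v * max (v 0) (v 1) = 3 - ε) ∧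
    -- every IC-IR mechanism with a finite signal space has revenue at most 2 + 2ε
    (∀ (ι : Type) (S : Finset ι) (σ : (Fin 2 → ℝ) → ι → ℝ)
        (x : ι → Fin 2 → ℝ) (q : ι → ℝ),
        IsInfo {wLow, wHigh ε} S σ → IsAlloc S x →
        IC {wLow, wHigh ε} (fHard ε) S σ x q → IR {wLow, wHigh ε} (fHard ε) S σ x q →
        Rev {wLow, wHigh ε} (fHard ε) S σ q ≤ 2 + 2 * ε) ∧
    -- consequently, for every ε' > 0 there is a two-product instance on which every
    -- IC-IR mechanism earns at most (2/3 + ε') times the optimal welfare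
    (∀ ε' : ℝ, 0 < ε' →
      ∃ (V : Finset (Fin 2 → ℝ)) (f : (Fin 2 → ℝ) → ℝ),
        V.Nonempty ∧ (∀ v ∈ V, 0 < f v) ∧ (∀ v, v ∉ V → f v = 0) ∧
        (∑ v ∈ V, f v = 1) ∧ (∀ v ∈ V, ∀ i, 0 ≤ v i) ∧
        (∀ (ι : Type) (S : Finset ι) (σ : (Fin 2 → ℝ) → ι → ℝ)
            (x : ι → Fin 2 → ℝ) (q : ι → ℝ),
            IsInfo V S σ → IsAlloc S x → IC V f S σ x q → IR V f S σ x q →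
            Rev V f S σ q ≤ (2 / 3 + ε') * ∑ v ∈ V, f v * max (v 0) (v 1))) := by
  refine ⟨welfare_hard ε hε0, rev_hard ε hε0 hε1, ?_⟩
  intro ε' hε'
  obtain ⟨δ, d0, d1, d2⟩ : ∃ δ : ℝ, 0 < δ ∧ δ ≤ 1 / 2 ∧ δ ≤ ε' / 2 :=
    ⟨min (1 / 2) (ε' / 2), by positivity, min_le_left _ _, min_le_right _ _⟩
  refine ⟨{wLow, wHigh δ}, fHard δ, by simp, ?_, ?_, ?_, ?_, ?_⟩
  · intro v hv
    simp only [Finset.mem_insert, Finset.mem_singleton] at hv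
    rcases hv with rfl | rfl
    · rw [f_low]; linarith
    · rw [f_high δ d0]; exact d0
  · intro v hv
    simp only [Finset.mem_insert, Finset.mem_singleton, not_or] at hv
    simp [fHard, hv.1, hv.2]
  · rw [sum_pair_hard δ d0, f_low, f_high δ d0]; ring
  · intro v hv i
    simp only [Finset.mem_insert, Finset.mem_singleton] at hv
    rcases hv with rfl | rfl <;> fin_cases i <;> simp [wLow, wHigh, d0.le]
  · intro ι S σ x q h1 h2 h3 h4
    rw [welfare_hard δ d0]
    have := rev_hard δ d0 (by linarith) ι S σ x q h1 h2 h3 h4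
    nlinarith [mul_le_mul_of_nonneg_left d1 hε'.le]

end Screening
end
end

section
/- Let f be a value distribution on ℝ_{≥0}^m with finite support on which every v has a unique maximizing coordinate i*(v). Suppose that for all i ≠ i' with P(i*(v)=i) > 0 and P(i*(v)=i') > 0 one has E[v_i | i*(v)=i] ≥ E[v_i | i*(v)=i']. Define prices p_i := E[v_i | i*(v)=i] for every i with P(i*(v)=i) > 0. Then: (i) for every i with P(i*(v)=i) > 0 and every i' with P(i*(v)=i') > 0, E[v_{i'} | i*(v)=i] − p_{i'} ≤ 0 = E[v_i | i*(v)=i] − p_i, so under horizontal disclosure the buyer receiving signal i optimally purchases product i at price p_i and obtains zero utility; and (ii) the resulting revenue satisfies Σ_{i : P(i*(v)=i) > 0} P(i*(v)=i)·p_i = E[max_j v_j], i.e., this pricing mechanism with horizontal disclosure extracts the full surplus. -/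
open Finset

noncomputable section

namespace Screening

variable {m : ℕ} {ι : Type}

/-- if, conditional on product `i` being the top product, the posterior
mean of product `i` is maximal, then the pricing mechanism with horizontal disclosure
and prices `p i = E[v_i | i*(v) = i]` is optimally obeyed by the buyer and extracts the
full surplus `E[max_j v_j]`. -/
theorem full_surplus_of_condition (m : ℕ) (hm : 0 < m)
    (V : Finset (Fin m → ℝ)) (f : (Fin m → ℝ) → ℝ)
    (hV : V.Nonempty)
    (hfpos : ∀ v ∈ V, 0 < f v)
    (hfzero : ∀ v, v ∉ V → f v = 0)
    (hsum : ∑ v ∈ V, f v = 1)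
    (hnn : ∀ v ∈ V, ∀ i, 0 ≤ v i)
    -- every value profile in the support has a unique maximizing coordinate i*(v)
    (istar : (Fin m → ℝ) → Fin m)
    (histar : ∀ v ∈ V, ∀ j, j ≠ istar v → v j < v (istar v))
    -- the sufficient condition: E[v_i | i*(v) = i] ≥ E[v_i | i*(v) = i']
    (hcond : ∀ i i' : Fin m, i ≠ i' →
      0 < probTop V f istar i → 0 < probTop V f istar i' →
      condMean V f istar i' i ≤ condMean V f istar i i)
    -- the prices p_i = E[v_i | i*(v) = i]
    (p : Fin m → ℝ)
    (hp : ∀ i, 0 < probTop V f istar i → p i = condMean V f istar i i) :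
    -- (i) upon signal i the buyer optimally purchases product i, at zero utility
    (∀ i, 0 < probTop V f istar i →
      condMean V f istar i i - p i = 0 ∧
      (∀ i', 0 < probTop V f istar i' → condMean V f istar i i' - p i' ≤ 0)) ∧
    -- (ii) the revenue equals the full surplus E[max_j v_j]
    (∑ i ∈ univ.filter (fun i => 0 < probTop V f istar i), probTop V f istar i * p i =
      ∑ v ∈ V, f v * vmax hm v) := by
  refine ⟨fun i hi => ⟨by rw [hp i hi, sub_self], fun i' hi' => ?_⟩, ?_⟩
  · rw [hp i' hi']
    by_cases h : i' = i
    · subst h; simp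
    · exact sub_nonpos.mpr (hcond i' i h hi' hi)
  · have hmax : ∀ v ∈ V, vmax hm v = v (istar v) := by
      intro v hv
      refine le_antisymm (Finset.sup'_le _ _ fun j _ => ?_) (Finset.le_sup' v (mem_univ _))
      by_cases h : j = istar v
      · rw [h]
      · exact (histar v hv j h).le
    have hterm : ∀ i, ∑ v ∈ V.filter (fun v => istar v = i), f v * vmax hm v
        = ∑ v ∈ V.filter (fun v => istar v = i), f v * v i := by
      intro i
      refine Finset.sum_congr rfl fun v hv => ?_
      obtain ⟨hv1, hv2⟩ := mem_filter.mp hv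
      rw [hmax v hv1, hv2]
    rw [← Finset.sum_fiberwise V istar (fun v => f v * vmax hm v), Finset.sum_filter]
    refine Finset.sum_congr rfl fun i _ => ?_
    rw [hterm i]
    split_ifs with h
    · rw [hp i h, condMean, mul_div_cancel₀ _ h.ne']
    · have hempty : V.filter (fun v => istar v = i) = ∅ := by
        by_contra hne
        exact h (Finset.sum_pos (fun v hv => hfpos v (mem_filter.mp hv).1)
          (Finset.nonempty_iff_ne_empty.mpr hne))
      rw [hempty, Finset.sum_empty]

end Screening
end
end

section
/- Let f be a probability mass function with finite support V ⊆ ℝ², extended by 0 outside V, satisfying the log-submodularity condition: for all (v1, v2), (v1', v2') ∈ ℝ², f(min(v1,v1'), max(v2,v2'))·f(max(v1,v1'), min(v2,v2')) ≥ f(v1,v2)·f(v1',v2'). Then: (i) if P(v1 ≥ v2) > 0, then E[v1 | v1 ≥ v2] ≥ E[v1]; and (ii) if in addition P(v1 < v2) > 0, then E[v1 | v1 ≥ v2] ≥ E[v1 | v1 < v2]. -/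
open Finset

noncomputable section

namespace Screening

open scoped FinsetFamily in
lemma fkg_core (V : Finset (ℝ × ℝ)) (f g h : ℝ × ℝ → ℝ)
    (hfpos : ∀ v ∈ V, 0 < f v)
    (hfzero : ∀ v, v ∉ V → f v = 0)
    (hlsm : ∀ v v' : ℝ × ℝ,
      f v * f v' ≤
        f (min v.1 v'.1, max v.2 v'.2) * f (max v.1 v'.1, min v.2 v'.2))
    (hg0 : ∀ v, 0 ≤ g v) (hh0 : ∀ v, 0 ≤ h v)
    (hg : ∀ a b c d : ℝ, a ≤ c → d ≤ b → g (a, b) ≤ g (c, d))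
    (hh : ∀ a b c d : ℝ, a ≤ c → d ≤ b → h (a, b) ≤ h (c, d)) :
    (∑ v ∈ V, f v * g v) * (∑ v ∈ V, f v * h v) ≤
      (∑ v ∈ V, f v) * (∑ v ∈ V, f v * (g v * h v)) := by
  classical
  have hf0 : ∀ v, 0 ≤ f v := fun v => by
    by_cases hv : v ∈ V
    · exact (hfpos v hv).le
    · exact (hfzero v hv).ge
  have hmem : ∀ v, 0 < f v → v ∈ V := fun v hv => by
    by_contra hn
    rw [hfzero v hn] at hv
    exact lt_irrefl _ hv
  let E : ℝ × ℝ ≃ ℝ × ℝᵒᵈ := Equiv.prodCongr (Equiv.refl ℝ) OrderDual.toDual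
  let e : ℝ × ℝᵒᵈ → ℝ × ℝ := fun p => (p.1, OrderDual.ofDual p.2)
  let W : Finset (ℝ × ℝᵒᵈ) := V.map E.toEmbedding
  have heE : ∀ v, e (E v) = v := fun v => rfl
  have hsumW : ∀ k : ℝ × ℝ → ℝ, ∑ p ∈ W, k (e p) = ∑ v ∈ V, k v := fun k => by
    simp only [W, Finset.sum_map]
    rfl
  have hW : ∀ p, p ∈ W ↔ e p ∈ V := fun p => by
    simp only [W, Finset.mem_map]
    constructor
    · rintro ⟨v, hv, rfl⟩
      exact hv
    · intro hp
      exact ⟨e p, hp, rfl⟩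
  have hl : ∀ p q : ℝ × ℝᵒᵈ, f (e p) * f (e q) ≤ f (e (p ⊓ q)) * f (e (p ⊔ q)) :=
    fun p q => hlsm (e p) (e q)
  have hpos : ∀ p ∈ W, ∀ q ∈ W, 0 < f (e (p ⊓ q)) * f (e (p ⊔ q)) := fun p hp q hq =>
    lt_of_lt_of_le (mul_pos (hfpos _ ((hW p).1 hp)) (hfpos _ ((hW q).1 hq))) (hl p q)
  have hinf : W ⊼ W ⊆ W := by
    intro r hr
    obtain ⟨p, hp, q, hq, rfl⟩ := Finset.mem_infs.1 hr
    exact (hW _).2 (hmem _ (pos_of_mul_pos_left (hpos p hp q hq) (hf0 _)))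
  have hsup : W ⊻ W ⊆ W := by
    intro r hr
    obtain ⟨p, hp, q, hq, rfl⟩ := Finset.mem_sups.1 hr
    exact (hW _).2 (hmem _ (pos_of_mul_pos_right (hpos p hp q hq) (hf0 _)))
  have hmg : ∀ p q : ℝ × ℝᵒᵈ, p ≤ q → g (e p) ≤ g (e q) := fun p q hpq =>
    hg _ _ _ _ hpq.1 hpq.2
  have hmh : ∀ p q : ℝ × ℝᵒᵈ, p ≤ q → h (e p) ≤ h (e q) := fun p q hpq =>
    hh _ _ _ _ hpq.1 hpq.2
  have key := four_functions_theorem (fun p => f (e p) * g (e p)) (fun p => f (e p) * h (e p))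
    (fun p => f (e p)) (fun p => f (e p) * (g (e p) * h (e p)))
    (fun p => mul_nonneg (hf0 _) (hg0 _)) (fun p => mul_nonneg (hf0 _) (hh0 _))
    (fun p => hf0 _) (fun p => mul_nonneg (hf0 _) (mul_nonneg (hg0 _) (hh0 _)))
    (fun p q => by
      rw [mul_mul_mul_comm, ← mul_assoc (f (e (p ⊓ q)))]
      exact mul_le_mul (hl p q)
        (mul_le_mul (hmg _ _ le_sup_left) (hmh _ _ le_sup_right) (hh0 _) (hg0 _))
        (mul_nonneg (hg0 _) (hh0 _)) (mul_nonneg (hf0 _) (hf0 _))) W W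
  rw [hsumW (fun v => f v * g v), hsumW (fun v => f v * h v)] at key
  refine key.trans ?_
  rw [← hsumW f, ← hsumW (fun v => f v * (g v * h v))]
  refine mul_le_mul (Finset.sum_le_sum_of_subset_of_nonneg hinf fun _ _ _ => hf0 _)
    (Finset.sum_le_sum_of_subset_of_nonneg hsup fun _ _ _ =>
      mul_nonneg (hf0 _) (mul_nonneg (hg0 _) (hh0 _)))
    (Finset.sum_nonneg fun _ _ => mul_nonneg (hf0 _) (mul_nonneg (hg0 _) (hh0 _)))
    (Finset.sum_nonneg fun _ _ => hf0 _)

/-- FKG-type corollary: for a log-submodular probability mass function on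
ℝ² with finite support, (i) `E[v1 | v1 ≥ v2] ≥ E[v1]`, and
(ii) `E[v1 | v1 ≥ v2] ≥ E[v1 | v1 < v2]`. -/
theorem fkg_conditional_expectation
    (V : Finset (ℝ × ℝ)) (f : ℝ × ℝ → ℝ)
    (hV : V.Nonempty)
    (hfpos : ∀ v ∈ V, 0 < f v)
    (hfzero : ∀ v, v ∉ V → f v = 0)
    (hsum : ∑ v ∈ V, f v = 1)
    -- log-submodularity: f(v)·f(v') ≤ f(min v1 v1', max v2 v2')·f(max v1 v1', min v2 v2')
    (hlsm : ∀ v v' : ℝ × ℝ,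
      f v * f v' ≤
        f (min v.1 v'.1, max v.2 v'.2) * f (max v.1 v'.1, min v.2 v'.2)) :
    -- (i)
    (0 < ∑ v ∈ V.filter (fun v => v.2 ≤ v.1), f v →
      (∑ v ∈ V, f v * v.1) ≤
        (∑ v ∈ V.filter (fun v => v.2 ≤ v.1), f v * v.1) /
          (∑ v ∈ V.filter (fun v => v.2 ≤ v.1), f v)) ∧
    -- (ii)
    (0 < ∑ v ∈ V.filter (fun v => v.2 ≤ v.1), f v →
      0 < ∑ v ∈ V.filter (fun v => ¬ v.2 ≤ v.1), f v →
      (∑ v ∈ V.filter (fun v => ¬ v.2 ≤ v.1), f v * v.1) /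
          (∑ v ∈ V.filter (fun v => ¬ v.2 ≤ v.1), f v) ≤
        (∑ v ∈ V.filter (fun v => v.2 ≤ v.1), f v * v.1) /
          (∑ v ∈ V.filter (fun v => v.2 ≤ v.1), f v)) := by
  have main : (∑ v ∈ V, f v * v.1) * (∑ v ∈ V.filter (fun v => v.2 ≤ v.1), f v) ≤
      ∑ v ∈ V.filter (fun v => v.2 ≤ v.1), f v * v.1 := by
    obtain ⟨c, hc⟩ : ∃ c : ℝ, ∀ v ∈ V, 0 ≤ v.1 + c := by
      refine ⟨∑ v ∈ V, |v.1|, fun v hv => ?_⟩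
      have h1 := Finset.single_le_sum (f := fun v : ℝ × ℝ => |v.1|)
        (fun _ _ => abs_nonneg _) hv
      have h2 := neg_abs_le v.1
      linarith
    have key := fkg_core V f (fun v => if v.2 ≤ v.1 then 1 else 0) (fun v => max (v.1 + c) 0)
      hfpos hfzero hlsm (fun v => by split_ifs <;> norm_num)
      (fun v => le_max_right _ _)
      (fun a b c d h1 h2 => by
        dsimp only
        split_ifs <;> first | (exfalso; linarith) | norm_num)
      (fun a b c d h1 h2 => max_le_max (by simpa using h1) le_rfl)
    have e1 : ∑ v ∈ V, f v * (if v.2 ≤ v.1 then (1 : ℝ) else 0) =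
        ∑ v ∈ V.filter (fun v => v.2 ≤ v.1), f v := by
      rw [Finset.sum_filter]
      exact Finset.sum_congr rfl fun v _ => by split_ifs <;> simp
    have e2 : ∑ v ∈ V, f v * max (v.1 + c) 0 = (∑ v ∈ V, f v * v.1) + c := by
      have : ∑ v ∈ V, f v * max (v.1 + c) 0 = ∑ v ∈ V, (f v * v.1 + f v * c) :=
        Finset.sum_congr rfl fun v hv => by rw [max_eq_left (hc v hv)]; ring
      rw [this, Finset.sum_add_distrib, ← Finset.sum_mul, hsum, one_mul]
    have e3 : ∑ v ∈ V, f v * ((if v.2 ≤ v.1 then (1 : ℝ) else 0) * max (v.1 + c) 0) =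
        (∑ v ∈ V.filter (fun v => v.2 ≤ v.1), f v * v.1) +
          (∑ v ∈ V.filter (fun v => v.2 ≤ v.1), f v) * c := by
      rw [Finset.sum_mul, ← Finset.sum_add_distrib, Finset.sum_filter]
      refine Finset.sum_congr rfl fun v hv => ?_
      rw [max_eq_left (hc v hv)]
      split_ifs <;> ring
    rw [e1, e2, e3, hsum] at key
    linarith
  have s1 := Finset.sum_filter_add_sum_filter_not V (fun v : ℝ × ℝ => v.2 ≤ v.1) f
  have s2 := Finset.sum_filter_add_sum_filter_not V (fun v : ℝ × ℝ => v.2 ≤ v.1)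
    (fun v => f v * v.1)
  refine ⟨fun hA => (le_div_iff₀ hA).2 main, fun hA hA' => ?_⟩
  rw [div_le_div_iff₀ hA' hA]
  rw [← s2] at main
  rw [hsum] at s1
  rw [eq_sub_of_add_eq' s1]
  linarith

end Screening
end
end

section
/- Let f be an exchangeable value distribution on ℝ_{≥0}^m with finite support on which every v has a unique maximizing coordinate i*(v). Define prices p_i := E[v_i | i*(v)=i] for every i with P(i*(v)=i) > 0. Then for every i with P(i*(v)=i) > 0 and every i' with P(i*(v)=i') > 0, E[v_{i'} | i*(v)=i] − p_{i'} ≤ 0 = E[v_i | i*(v)=i] − p_i (so under horizontal disclosure the buyer receiving signal i optimally purchases product i), and Σ_{i : P(i*(v)=i) > 0} P(i*(v)=i)·p_i = E[max_j v_j]. That is, under exchangeability a pricing mechanism with horizontal disclosure extracts the full surplus. -/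
open Finset

noncomputable section

namespace Screening

variable {m : ℕ} {ι : Type}

/-- `f` is exchangeable: invariant under permutations of the coordinates. -/
def Exchangeable {m : ℕ} (f : (Fin m → ℝ) → ℝ) : Prop :=
  ∀ (π : Equiv.Perm (Fin m)) (v : Fin m → ℝ), (∀ i, 0 ≤ v i) → f (v ∘ π) = f v

lemma swap_sum {m : ℕ} (V : Finset (Fin m → ℝ)) (f : (Fin m → ℝ) → ℝ)
    (hfpos : ∀ v ∈ V, 0 < f v)
    (hfzero : ∀ v, v ∉ V → f v = 0)
    (hnn : ∀ v ∈ V, ∀ i, 0 ≤ v i)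
    (hexch : Exchangeable f)
    (top : (Fin m → ℝ) → Fin m)
    (htop : ∀ v ∈ V, ∀ j, j ≠ top v → v j < v (top v))
    (g : (Fin m → ℝ) → ℝ) (a b : Fin m) :
    ∑ v ∈ V.filter (fun v => top v = a), f v * g (v ∘ Equiv.swap a b) =
      ∑ v ∈ V.filter (fun v => top v = b), f v * g v := by
  have hmem : ∀ v ∈ V, v ∘ Equiv.swap a b ∈ V := by
    intro v hv
    by_contra h
    have h1 := hfzero _ h
    rw [hexch _ v (hnn v hv)] at h1
    exact (hfpos v hv).ne' h1
  have htop' : ∀ v ∈ V, top (v ∘ Equiv.swap a b) = Equiv.swap a b (top v) := by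
    intro v hv
    by_contra h
    have h1 := htop _ (hmem v hv) (Equiv.swap a b (top v)) (fun e => h e.symm)
    simp only [Function.comp, Equiv.swap_apply_self] at h1
    have h2 : Equiv.swap a b (top (v ∘ Equiv.swap a b)) ≠ top v := by
      intro e
      apply h
      rw [← e, Equiv.swap_apply_self]
    have h3 := htop v hv _ h2
    exact absurd h1 (not_lt.mpr h3.le)
  have hinv : ∀ v : Fin m → ℝ, (v ∘ Equiv.swap a b) ∘ Equiv.swap a b = v := by
    intro v
    ext j
    simp
  refine Finset.sum_bij' (fun v _ => v ∘ Equiv.swap a b) (fun v _ => v ∘ Equiv.swap a b)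
    ?_ ?_ ?_ ?_ ?_
  · intro v hv
    rw [mem_filter] at hv ⊢
    exact ⟨hmem v hv.1, by rw [htop' v hv.1, hv.2, Equiv.swap_apply_left]⟩
  · intro v hv
    rw [mem_filter] at hv ⊢
    exact ⟨hmem v hv.1, by rw [htop' v hv.1, hv.2, Equiv.swap_apply_right]⟩
  · intro v _
    exact hinv v
  · intro v _
    exact hinv v
  · intro v hv
    rw [mem_filter] at hv
    rw [hexch _ v (hnn v hv.1)]

/-- under exchangeability, the pricing mechanism with horizontal
disclosure and prices `p i = E[v_i | i*(v) = i]` is optimally obeyed by the buyer and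
extracts the full surplus `E[max_j v_j]`. -/
theorem exchangeable_full_surplus (m : ℕ) (hm : 0 < m)
    (V : Finset (Fin m → ℝ)) (f : (Fin m → ℝ) → ℝ)
    (hV : V.Nonempty)
    (hfpos : ∀ v ∈ V, 0 < f v)
    (hfzero : ∀ v, v ∉ V → f v = 0)
    (hsum : ∑ v ∈ V, f v = 1)
    (hnn : ∀ v ∈ V, ∀ i, 0 ≤ v i)
    (hexch : Exchangeable f)
    -- every value profile in the support has a unique maximizing coordinate i*(v)
    (istar : (Fin m → ℝ) → Fin m)
    (histar : ∀ v ∈ V, ∀ j, j ≠ istar v → v j < v (istar v))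
    -- the prices p_i = E[v_i | i*(v) = i]
    (p : Fin m → ℝ)
    (hp : ∀ i, 0 < probTop V f istar i → p i = condMean V f istar i i) :
    -- (i) upon signal i the buyer optimally purchases product i, at zero utility
    (∀ i, 0 < probTop V f istar i →
      condMean V f istar i i - p i = 0 ∧
      (∀ i', 0 < probTop V f istar i' → condMean V f istar i i' - p i' ≤ 0)) ∧
    -- (ii) the revenue equals the full surplus E[max_j v_j]
    (∑ i ∈ univ.filter (fun i => 0 < probTop V f istar i), probTop V f istar i * p i =
      ∑ v ∈ V, f v * vmax hm v) := by
  have hle : ∀ v ∈ V, ∀ j, v j ≤ v (istar v) := by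
    intro v hv j
    by_cases h : j = istar v
    · rw [h]
    · exact (histar v hv j h).le
  refine ⟨?_, ?_⟩
  · intro i hi
    refine ⟨by rw [hp i hi, sub_self], ?_⟩
    intro i' hi'
    rw [hp i' hi', sub_nonpos]
    have hP : probTop V f istar i = probTop V f istar i' := by
      have := swap_sum V f hfpos hfzero hnn hexch istar histar (fun _ => 1) i i'
      simpa [probTop] using this
    have hN := swap_sum V f hfpos hfzero hnn hexch istar histar (fun v => v i') i i'
    simp only [Function.comp, Equiv.swap_apply_right] at hN
    unfold condMean
    rw [← hN, ← hP]
    refine div_le_div_of_nonneg_right ?_ hi.le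
    refine Finset.sum_le_sum ?_
    intro v hv
    rw [mem_filter] at hv
    refine mul_le_mul_of_nonneg_left ?_ (hfpos v hv.1).le
    have := hle v hv.1 i'
    rwa [hv.2] at this
  · have hterm : ∀ i, (if 0 < probTop V f istar i then probTop V f istar i * p i else 0) =
        ∑ v ∈ V.filter (fun v => istar v = i), f v * vmax hm v := by
      intro i
      have hv : ∀ v ∈ V.filter (fun v => istar v = i), f v * vmax hm v = f v * v i := by
        intro v hv
        rw [mem_filter] at hv
        congr 1
        apply le_antisymm
        · refine Finset.sup'_le _ _ ?_
          intro j _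
          have := hle v hv.1 j
          rwa [hv.2] at this
        · exact Finset.le_sup' v (mem_univ i)
      rw [Finset.sum_congr rfl hv]
      split_ifs with h
      · rw [hp i h, condMean, mul_div_cancel₀ _ h.ne']
      · have he : V.filter (fun v => istar v = i) = ∅ := by
          by_contra hne
          apply h
          refine Finset.sum_pos ?_ (Finset.nonempty_iff_ne_empty.mpr hne)
          intro v hv
          exact hfpos v (mem_filter.mp hv).1
        rw [he, Finset.sum_empty]
    rw [Finset.sum_filter, Finset.sum_congr rfl (fun i _ => hterm i)]
    exact Finset.sum_fiberwise V istar (fun v => f v * vmax hm v)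

end Screening
end
end

section
/- Let f be an exchangeable value distribution on ℝ_{≥0}^m with finite support on which every v has a unique maximizing coordinate i*(v). Then for all i ≠ i' with P(i*(v)=i) > 0 and P(i*(v)=i') > 0: (i) E[max_j v_j | i*(v)=i] = E[max_j v_j | i*(v)=i'], and (ii) E[v_i | i*(v)=i] ≥ E[v_i | i*(v)=i']. -/
open Finset

noncomputable section

namespace Screening

variable {m : ℕ} {ι : Type}

/-- The conditional expectation of `max_j v_j` given that `i` is the top product. -/
def condMax {m : ℕ} (hm : 0 < m) (V : Finset (Fin m → ℝ)) (f : (Fin m → ℝ) → ℝ)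
    (top : (Fin m → ℝ) → Fin m) (i : Fin m) : ℝ :=
  (∑ v ∈ V.filter (fun v => top v = i), f v * vmax hm v) / probTop V f top i

/-- under exchangeability, (i) the conditional expectation of the maximum
value given the identity of the top product does not depend on that identity, and
(ii) `E[v_i | i*(v) = i] ≥ E[v_i | i*(v) = i']`. -/
theorem exchangeable_condition (m : ℕ) (hm : 0 < m)
    (V : Finset (Fin m → ℝ)) (f : (Fin m → ℝ) → ℝ)
    (hV : V.Nonempty)
    (hfpos : ∀ v ∈ V, 0 < f v)
    (hfzero : ∀ v, v ∉ V → f v = 0)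
    (hsum : ∑ v ∈ V, f v = 1)
    (hnn : ∀ v ∈ V, ∀ i, 0 ≤ v i)
    (hexch : Exchangeable f)
    -- every value profile in the support has a unique maximizing coordinate i*(v)
    (istar : (Fin m → ℝ) → Fin m)
    (histar : ∀ v ∈ V, ∀ j, j ≠ istar v → v j < v (istar v)) :
    ∀ i i' : Fin m, i ≠ i' →
      0 < probTop V f istar i → 0 < probTop V f istar i' →
      condMax hm V f istar i = condMax hm V f istar i' ∧
      condMean V f istar i' i ≤ condMean V f istar i i := by
  intro i i' hii hp hp'
  set π : Equiv.Perm (Fin m) := Equiv.swap i i' with hπ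
  have hinv : ∀ v : Fin m → ℝ, (v ∘ π) ∘ π = v := by
    intro v
    funext j
    simp [hπ]
  have hmem : ∀ v ∈ V, v ∘ π ∈ V := by
    intro v hv
    by_contra h
    have h1 := hexch π v (hnn v hv)
    rw [hfzero _ h] at h1
    exact (hfpos v hv).ne h1
  have htop : ∀ v ∈ V, istar (v ∘ π) = π (istar v) := by
    intro v hv
    by_contra h
    have h1 := histar _ (hmem v hv) (π (istar v)) (fun e => h e.symm)
    have h2 : π (π (istar v)) = istar v := by simp [hπ]
    simp only [Function.comp_apply, h2] at h1
    have h3 := histar v hv (π (istar (v ∘ π))) (fun e => by rw [e] at h1; exact lt_irrefl _ h1)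
    exact lt_asymm h1 h3
  have key : ∀ g h : (Fin m → ℝ) → ℝ, (∀ v ∈ V, g v = h (v ∘ π)) →
      ∑ v ∈ V.filter (fun v => istar v = i), f v * g v =
      ∑ v ∈ V.filter (fun v => istar v = i'), f v * h v := by
    intro g h hgh
    refine Finset.sum_bij' (fun v _ => v ∘ π) (fun v _ => v ∘ π) ?_ ?_ ?_ ?_ ?_
    · intro v hv
      rw [mem_filter] at hv ⊢
      refine ⟨hmem v hv.1, ?_⟩
      rw [htop v hv.1, hv.2, hπ, Equiv.swap_apply_left]
    · intro v hv
      rw [mem_filter] at hv ⊢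
      refine ⟨hmem v hv.1, ?_⟩
      rw [htop v hv.1, hv.2, hπ, Equiv.swap_apply_right]
    · intro v _
      exact hinv v
    · intro v _
      exact hinv v
    · intro v hv
      rw [mem_filter] at hv
      rw [hgh v hv.1, hexch π v (hnn v hv.1)]
  have hprob : probTop V f istar i = probTop V f istar i' := by
    have := key (fun _ => 1) (fun _ => 1) (fun _ _ => rfl)
    simpa [probTop] using this
  have hmax : ∀ v ∈ V, vmax hm v = v (istar v) := by
    intro v hv
    unfold vmax
    apply le_antisymm
    · refine Finset.sup'_le _ _ (fun j _ => ?_)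
      by_cases hj : j = istar v
      · rw [hj]
      · exact (histar v hv j hj).le
    · exact Finset.le_sup' v (mem_univ _)
  constructor
  · unfold condMax
    rw [hprob, key (vmax hm) (vmax hm)]
    intro v hv
    rw [hmax v hv, hmax _ (hmem v hv), htop v hv]
    simp [hπ]
  · unfold condMean
    rw [← key (fun v => v i') (fun v => v i) (fun v _ => by simp [hπ]), ← hprob]
    apply div_le_div_of_nonneg_right _ hp.le
    apply Finset.sum_le_sum
    intro v hv
    rw [mem_filter] at hv
    apply mul_le_mul_of_nonneg_left _ (hfpos v hv.1).le
    have := histar v hv.1 i' (by rw [hv.2]; exact hii.symm)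
    rw [hv.2] at this
    exact this.le

end Screening
end
end

section
/- Let f be a generic value distribution on ℝ_{≥0}^m with finite support, i.e., for all i ≠ i', P(v_i = v_{i'}) = 0, so every v in the support has a unique maximizing coordinate i*(v). Suppose there exist a finite signal space S, an information structure σ, and an IC-IR mechanism (x, p) on S whose revenue equals the optimal welfare E[max_j v_j] (full surplus extraction). Then for all i ≠ i' with P(i*(v)=i) > 0 and P(i*(v)=i') > 0, one has E[v_i | i*(v)=i] ≥ E[v_i | i*(v)=i']. -/
open Finset

noncomputable section

namespace Screening

variable {m : ℕ} {ι : Type}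

/-- Where the allocation attains the maximum, it is a point mass on the maximizer. -/
lemma alloc_point {m : ℕ} (y v : Fin m → ℝ) (k : Fin m) (hy : ∀ i, 0 ≤ y i)
    (hs : ∑ i, y i ≤ 1) (hk : 0 < v k) (hlt : ∀ j, j ≠ k → v j < v k)
    (heq : ∑ i, v i * y i = v k) : y k = 1 ∧ ∀ j, j ≠ k → y j = 0 := by
  have hle : ∀ j, v j ≤ v k := fun j => by
    by_cases h : j = k
    · rw [h]
    · exact (hlt j h).le
  have h1 : ∑ i, y i * (v k - v i) = (∑ i, y i) * v k - v k := by
    rw [← heq, heq, Finset.sum_mul, ← heq, heq]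
    nth_rewrite 3 [← heq]
    rw [← Finset.sum_sub_distrib]
    exact Finset.sum_congr rfl fun i _ => by ring
  have hn : ∀ i ∈ (univ : Finset (Fin m)), 0 ≤ y i * (v k - v i) := fun i _ =>
    mul_nonneg (hy i) (sub_nonneg.2 (hle i))
  have h0 : ∑ i, y i * (v k - v i) = 0 := by
    apply le_antisymm _ (Finset.sum_nonneg hn)
    rw [h1]; nlinarith
  have hz : ∀ j, j ≠ k → y j = 0 := fun j hj => by
    have := (Finset.sum_eq_zero_iff_of_nonneg hn).1 h0 j (mem_univ _)
    rcases mul_eq_zero.1 this with h | h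
    · exact h
    · linarith [hlt j hj]
  refine ⟨?_, hz⟩
  rw [Finset.sum_eq_single k (fun j _ hj => by rw [hz j hj, mul_zero]) (by simp)] at heq
  exact mul_left_cancel₀ hk.ne' (by rw [heq, mul_one])

/-- for a generic distribution, if some IC-IR mechanism (over some
information structure with finite signal space) extracts the full surplus, then for all
top-signals `i ≠ i'` of positive probability, `E[v_i | i*(v)=i] ≥ E[v_i | i*(v)=i']`. -/
theorem full_surplus_necessity (m : ℕ) (hm : 0 < m)
    (V : Finset (Fin m → ℝ)) (f : (Fin m → ℝ) → ℝ)
    (hV : V.Nonempty)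
    (hfpos : ∀ v ∈ V, 0 < f v)
    (hfzero : ∀ v, v ∉ V → f v = 0)
    (hsum : ∑ v ∈ V, f v = 1)
    (hnn : ∀ v ∈ V, ∀ i, 0 ≤ v i)
    -- genericity: for all i ≠ i', P(v_i = v_{i'}) = 0
    (hgen : ∀ i i' : Fin m, i ≠ i' →
      ∑ v ∈ V.filter (fun v => v i = v i'), f v = 0)
    -- hence every value profile in the support has a unique maximizing coordinate i*(v)
    (istar : (Fin m → ℝ) → Fin m)
    (histar : ∀ v ∈ V, ∀ j, v j ≤ v (istar v))
    -- some IC-IR mechanism extracts the full surplus E[max_j v_j]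
    (hfull : ∃ (κ : Type) (S : Finset κ) (σ : (Fin m → ℝ) → κ → ℝ)
        (x : κ → Fin m → ℝ) (q : κ → ℝ),
        IsInfo V S σ ∧ IsAlloc S x ∧ IC V f S σ x q ∧ IR V f S σ x q ∧
        Rev V f S σ q = ∑ v ∈ V, f v * vmax hm v) :
    ∀ i i' : Fin m, i ≠ i' →
      0 < probTop V f istar i → 0 < probTop V f istar i' →
      condMean V f istar i' i ≤ condMean V f istar i i := by
  intro i i' hii hpi hpi'
  obtain ⟨κ, S, σ, x, q, hinfo, halloc, hic, hir, hrev⟩ := hfull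
  -- strict uniqueness of the maximizer
  have hne : ∀ v ∈ V, ∀ a b : Fin m, a ≠ b → v a ≠ v b := by
    intro v hv a b hab h
    have h0 := hgen a b hab
    rw [Finset.sum_eq_zero_iff_of_nonneg
      (fun w hw => (hfpos w (mem_filter.1 hw).1).le)] at h0
    exact (hfpos v hv).ne' (h0 v (mem_filter.2 ⟨hv, h⟩))
  have hlt : ∀ v ∈ V, ∀ j, j ≠ istar v → v j < v (istar v) := fun v hv j hj =>
    lt_of_le_of_ne (histar v hv j) (hne v hv j _ hj)
  have hpos : ∀ v ∈ V, 0 < v (istar v) := by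
    intro v hv
    by_cases h : i = istar v
    · exact lt_of_le_of_lt (hnn v hv i') (hlt v hv i' (fun h' => hii (h.trans h'.symm)))
    · exact lt_of_le_of_lt (hnn v hv i) (hlt v hv i h)
  have hvmax : ∀ v ∈ V, vmax hm v = v (istar v) := by
    intro v hv
    exact le_antisymm (Finset.sup'_le _ _ fun j _ => histar v hv j)
      (Finset.le_sup' v (mem_univ _))
  have hg0 : ∀ s, ∀ v ∈ V, 0 ≤ f v * σ v s := fun s v hv =>
    mul_nonneg (hfpos v hv).le ((hinfo v hv).1 s)
  have hr0 : ∀ s, 0 ≤ sigR V f σ s := fun s => Finset.sum_nonneg (hg0 s)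
  have hpost : ∀ s, 0 < sigR V f σ s → ∀ j,
      sigR V f σ s * post V f σ s j = ∑ v ∈ V, f v * σ v s * v j := by
    intro s hs j
    unfold post
    field_simp
  have hpost2 : ∀ s, 0 < sigR V f σ s → ∀ y : Fin m → ℝ,
      sigR V f σ s * (∑ j, post V f σ s j * y j)
        = ∑ v ∈ V, f v * σ v s * ∑ j, v j * y j := by
    intro s hs y
    simp_rw [Finset.mul_sum]
    rw [Finset.sum_comm]
    refine Finset.sum_congr rfl fun j _ => ?_
    rw [← mul_assoc, hpost s hs, Finset.sum_mul]
    exact Finset.sum_congr rfl fun v _ => by ring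
  -- pointwise bounds
  have hB : ∀ s ∈ S, ∀ v ∈ V, f v * σ v s * ∑ j, v j * x s j
      ≤ f v * σ v s * v (istar v) := by
    intro s hs v hv
    apply mul_le_mul_of_nonneg_left _ (hg0 s v hv)
    obtain ⟨h1, -, h3⟩ := halloc s hs
    calc ∑ j, v j * x s j ≤ ∑ j, v (istar v) * x s j :=
          Finset.sum_le_sum fun j _ => mul_le_mul_of_nonneg_right (histar v hv j) (h1 j)
      _ = v (istar v) * ∑ j, x s j := by rw [Finset.mul_sum]
      _ ≤ v (istar v) := by nlinarith [hpos v hv]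
  have hA : ∀ s ∈ S, sigR V f σ s * q s ≤ ∑ v ∈ V, f v * σ v s * ∑ j, v j * x s j := by
    intro s hs
    rcases (hr0 s).eq_or_lt with h | h
    · have hz : ∀ v ∈ V, f v * σ v s = 0 :=
        (Finset.sum_eq_zero_iff_of_nonneg (hg0 s)).1 h.symm
      rw [← h, zero_mul]
      exact (Finset.sum_eq_zero fun v hv => by rw [hz v hv, zero_mul]).ge
    · rw [← hpost2 s h]
      exact mul_le_mul_of_nonneg_left (by linarith [hir s hs h]) h.le
  have hC : ∀ s ∈ S, sigR V f σ s * q s ≤ ∑ v ∈ V, f v * σ v s * v (istar v) :=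
    fun s hs => (hA s hs).trans (Finset.sum_le_sum (hB s hs))
  have htot : ∑ s ∈ S, sigR V f σ s * q s
      = ∑ s ∈ S, ∑ v ∈ V, f v * σ v s * v (istar v) := by
    rw [Finset.sum_comm]
    refine Eq.trans hrev (Finset.sum_congr rfl fun v hv => ?_)
    rw [← Finset.sum_mul, ← Finset.mul_sum, (hinfo v hv).2.2, hvmax v hv, mul_one]
  have hEq := (Finset.sum_eq_sum_iff_of_le hC).1 htot
  have hEqv : ∀ s ∈ S, ∀ v ∈ V, f v * σ v s * ∑ j, v j * x s j
      = f v * σ v s * v (istar v) := fun s hs =>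
    (Finset.sum_eq_sum_iff_of_le (hB s hs)).1
      (le_antisymm (Finset.sum_le_sum (hB s hs)) ((hEq s hs).symm.le.trans (hA s hs)))
  have hx : ∀ s ∈ S, ∀ v ∈ V, σ v s ≠ 0 →
      x s (istar v) = 1 ∧ ∀ j, j ≠ istar v → x s j = 0 := by
    intro s hs v hv hσ
    exact alloc_point (x s) v (istar v) (halloc s hs).1 (halloc s hs).2.2 (hpos v hv)
      (hlt v hv) (mul_left_cancel₀ (mul_ne_zero (hfpos v hv).ne' hσ) (hEqv s hs v hv))
  have huniq : ∀ s ∈ S, ∀ v ∈ V, ∀ w ∈ V, σ v s ≠ 0 → σ w s ≠ 0 → istar w = istar v := by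
    intro s hs v hv w hw h1 h2
    by_contra hc
    have := (hx s hs v hv h1).2 _ hc
    rw [(hx s hs w hw h2).1] at this
    exact one_ne_zero this
  have hrpos : ∀ s, ∀ v ∈ V, σ v s ≠ 0 → 0 < sigR V f σ s := by
    intro s v hv h
    exact Finset.sum_pos' (hg0 s)
      ⟨v, hv, mul_pos (hfpos v hv) (lt_of_le_of_ne ((hinfo v hv).1 s) h.symm)⟩
  -- restricting sums to a class
  have hrestr : ∀ s ∈ S, ∀ w ∈ V, σ w s ≠ 0 → ∀ c : (Fin m → ℝ) → ℝ,
      ∑ v ∈ V.filter (fun v => istar v = istar w), f v * σ v s * c v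
        = ∑ v ∈ V, f v * σ v s * c v := by
    intro s hs w hw h c
    refine Finset.sum_subset (Finset.filter_subset _ _) fun v hv hv' => ?_
    by_cases h0 : σ v s = 0
    · rw [h0]; ring
    · exact absurd (mem_filter.2 ⟨hv, huniq s hs w hw v hv h h0⟩) hv'
  have key : ∀ s ∈ S, ∀ s' ∈ S,
      (∑ v ∈ V.filter (fun v => istar v = i'), f v * σ v s * v i) *
        (∑ v ∈ V.filter (fun v => istar v = i), f v * σ v s' * 1) ≤
      (∑ v ∈ V.filter (fun v => istar v = i), f v * σ v s' * v i) *
        (∑ v ∈ V.filter (fun v => istar v = i'), f v * σ v s * 1) := by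
    intro s hs s' hs'
    by_cases hw : ∃ w ∈ V, istar w = i' ∧ σ w s ≠ 0
    swap
    · push Not at hw
      have hz : ∀ c : (Fin m → ℝ) → ℝ,
          ∑ v ∈ V.filter (fun v => istar v = i'), f v * σ v s * c v = 0 := fun c =>
        Finset.sum_eq_zero fun v hv => by
          rw [hw v (mem_filter.1 hv).1 (mem_filter.1 hv).2]; ring
      rw [hz (fun v => v i), hz (fun _ => 1)]; simp
    by_cases hw' : ∃ w ∈ V, istar w = i ∧ σ w s' ≠ 0
    swap
    · push Not at hw'
      have hz : ∀ c : (Fin m → ℝ) → ℝ,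
          ∑ v ∈ V.filter (fun v => istar v = i), f v * σ v s' * c v = 0 := fun c =>
        Finset.sum_eq_zero fun v hv => by
          rw [hw' v (mem_filter.1 hv).1 (mem_filter.1 hv).2]; ring
      rw [hz (fun v => v i), hz (fun _ => 1)]; simp
    obtain ⟨w, hwV, hwi, hwσ⟩ := hw
    obtain ⟨w', hwV', hwi', hwσ'⟩ := hw'
    have hr := hrpos s w hwV hwσ
    have hr' := hrpos s' w' hwV' hwσ'
    have e1 := hrestr s hs w hwV hwσ
    have e2 := hrestr s' hs' w' hwV' hwσ'
    rw [hwi] at e1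
    rw [hwi'] at e2
    rw [e1 (fun v => v i), e1 (fun _ => 1), e2 (fun v => v i), e2 (fun _ => 1)]
    simp only [mul_one]
    rw [← hpost s hr, ← hpost s' hr']
    have hprice : ∀ t ∈ S, 0 < sigR V f σ t → (∑ j, post V f σ t j * x t j) = q t := by
      intro t ht hrt
      apply mul_left_cancel₀ hrt.ne'
      rw [hpost2 t hrt, hEq t ht]
      exact Finset.sum_congr rfl (hEqv t ht)
    have hX := hx s' hs' w' hwV' hwσ'
    rw [hwi'] at hX
    have hval : ∀ t, (∑ j, post V f σ t j * x s' j) = post V f σ t i := by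
      intro t
      rw [Finset.sum_eq_single i (fun j _ hj => by rw [hX.2 j hj, mul_zero]) (by simp),
        hX.1, mul_one]
    have h1 := hic s hs hr s' hs'
    have h2 := hprice s hs hr
    have h3 := hprice s' hs' hr'
    rw [hval] at h1 h3
    have h4 : post V f σ s i ≤ post V f σ s' i := by linarith
    change sigR V f σ s * post V f σ s i * sigR V f σ s'
      ≤ sigR V f σ s' * post V f σ s' i * sigR V f σ s
    nlinarith [mul_le_mul_of_nonneg_left h4 (mul_pos hr hr').le]
  have hagg : ∀ k, ∀ c : (Fin m → ℝ) → ℝ,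
      ∑ s ∈ S, ∑ v ∈ V.filter (fun v => istar v = k), f v * σ v s * c v
        = ∑ v ∈ V.filter (fun v => istar v = k), f v * c v := by
    intro k c
    rw [Finset.sum_comm]
    refine Finset.sum_congr rfl fun v hv => ?_
    rw [← Finset.sum_mul, ← Finset.mul_sum, (hinfo v (mem_filter.1 hv).1).2.2, mul_one]
  unfold condMean
  rw [div_le_div_iff₀ hpi' hpi]
  have hP : ∀ k, probTop V f istar k
      = ∑ v ∈ V.filter (fun v => istar v = k), f v * (fun _ => (1:ℝ)) v := by
    intro k; simp [probTop]
  rw [hP, hP, ← hagg i' (fun v => v i), ← hagg i (fun v => v i), ← hagg i, ← hagg i',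
    Finset.sum_mul_sum, Finset.sum_mul_sum, Finset.sum_comm (s := S) (t := S)
      (f := fun a b => (∑ v ∈ V.filter (fun v => istar v = i), f v * σ v a * v i) * _)]
  exact Finset.sum_le_sum fun s hs => Finset.sum_le_sum fun s' hs' => key s hs s' hs'


end Screening
end
end

section
/- Consider m = 2 products and the value distribution with f(5, 4) = 1/2 and f(9, 10) = 1/2. Then the optimal welfare equals E[max(v1, v2)] = 15/2, no IC-IR mechanism with finite signal space has revenue equal to 15/2 (full surplus extraction is impossible), and there exists an IC-IR mechanism with revenue 7, namely the no-information mechanism with a single signal that sells product 2 at price 7 (x = (0, 1), p = 7, which is IR since the posterior mean of product 2 is 7). -/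
open Finset

noncomputable section

namespace Screening

variable {m : ℕ} {ι : Type}

/-- The first type `(5, 4)`. -/
def u1 : Fin 2 → ℝ := ![5, 4]

/-- The second type `(9, 10)`. -/
def u2 : Fin 2 → ℝ := ![9, 10]

/-- The support of the two-product instance. -/
def V2 : Finset (Fin 2 → ℝ) := {u1, u2}

/-- The distribution: each type with probability 1/2. -/
def f2 : (Fin 2 → ℝ) → ℝ := fun v => if v = u1 then 1 / 2 else if v = u2 then 1 / 2 else 0

/-- The no-information structure with a single signal. -/
def σNoInfo : (Fin 2 → ℝ) → Unit → ℝ := fun _ _ => 1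

lemma u1_ne_u2 : u1 ≠ u2 := by
  intro h
  have := congrFun h 0
  norm_num [u1, u2] at this

lemma sum_V2 (g : (Fin 2 → ℝ) → ℝ) : ∑ v ∈ V2, f2 v * g v = (g u1 + g u2) / 2 := by
  rw [V2, Finset.sum_pair u1_ne_u2]
  simp only [f2, if_true, if_neg u1_ne_u2.symm]
  ring

lemma sigR_V2 {ι : Type} (σ : (Fin 2 → ℝ) → ι → ℝ) (s : ι) :
    sigR V2 f2 σ s = (σ u1 s + σ u2 s) / 2 := by
  rw [sigR, sum_V2 (fun v => σ v s)]

lemma post_V2 {ι : Type} (σ : (Fin 2 → ℝ) → ι → ℝ) (s : ι) (i : Fin 2) :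
    post V2 f2 σ s i = (σ u1 s * u1 i + σ u2 s * u2 i) / (σ u1 s + σ u2 s) := by
  rw [post, sigR_V2]
  simp only [mul_assoc]
  rw [sum_V2 (fun v => σ v s * v i)]
  exact div_div_div_cancel_right₀ two_ne_zero _ _

lemma no_extract (ι : Type) (S : Finset ι) (σ : (Fin 2 → ℝ) → ι → ℝ)
    (x : ι → Fin 2 → ℝ) (q : ι → ℝ) (hI : IsInfo V2 S σ) (hA : IsAlloc S x)
    (hC : IC V2 f2 S σ x q) (hR : IR V2 f2 S σ x q) :
    Rev V2 f2 S σ q ≠ 15 / 2 := by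
  intro hrev
  obtain ⟨a0, -, a1⟩ := hI u1 (by simp [V2])
  obtain ⟨b0, -, b1⟩ := hI u2 (by simp [V2])
  have e10 : u1 0 = 5 := rfl
  have e11 : u1 1 = 4 := rfl
  have e20 : u2 0 = 9 := rfl
  have e21 : u2 1 = 10 := rfl
  have ir : ∀ s ∈ S, (σ u1 s + σ u2 s) * q s ≤
      (5 * σ u1 s + 9 * σ u2 s) * x s 0 + (4 * σ u1 s + 10 * σ u2 s) * x s 1 := by
    intro s hs
    have ha := a0 s
    have hb := b0 s
    rcases (add_nonneg ha hb).eq_or_lt with h | h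
    · have h1 : σ u1 s = 0 := by linarith
      have h2 : σ u2 s = 0 := by linarith
      simp [h1, h2]
    · have := hR s hs (by rw [sigR_V2]; linarith)
      simp only [Fin.sum_univ_two, post_V2, e10, e11, e20, e21] at this
      have h3 := mul_nonneg h.le this
      have : (σ u1 s + σ u2 s) * ((σ u1 s * 5 + σ u2 s * 9) / (σ u1 s + σ u2 s) * x s 0 +
        (σ u1 s * 4 + σ u2 s * 10) / (σ u1 s + σ u2 s) * x s 1 - q s) =
        (5 * σ u1 s + 9 * σ u2 s) * x s 0 + (4 * σ u1 s + 10 * σ u2 s) * x s 1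
          - (σ u1 s + σ u2 s) * q s := by
        field_simp
      linarith
  have alloc : ∀ s ∈ S, 0 ≤ x s 0 ∧ 0 ≤ x s 1 ∧ x s 0 + x s 1 ≤ 1 := by
    intro s hs
    obtain ⟨h1, -, h2⟩ := hA s hs
    rw [Fin.sum_univ_two] at h2
    exact ⟨h1 0, h1 1, h2⟩
  have le : ∀ s ∈ S, sigR V2 f2 σ s * q s ≤ (5 * σ u1 s + 10 * σ u2 s) / 2 := by
    intro s hs
    obtain ⟨h0, h1, h2⟩ := alloc s hs
    have h3 := ir s hs
    rw [sigR_V2]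
    nlinarith [mul_nonneg (a0 s) h1, mul_nonneg (b0 s) h0,
      mul_nonneg (a0 s) (sub_nonneg.2 h2), mul_nonneg (b0 s) (sub_nonneg.2 h2)]
  have hsum : ∑ s ∈ S, (5 * σ u1 s + 10 * σ u2 s) / 2 = 15 / 2 := by
    rw [← Finset.sum_div, Finset.sum_add_distrib, ← Finset.mul_sum, ← Finset.mul_sum, a1, b1]
    norm_num
  have eq := (Finset.sum_eq_sum_iff_of_le le).1 (hrev.trans hsum.symm)
  have key : ∀ s ∈ S, σ u1 s * x s 1 = 0 ∧ σ u2 s * x s 0 = 0 ∧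
      σ u1 s * (1 - x s 0 - x s 1) = 0 ∧ σ u2 s * (1 - x s 0 - x s 1) = 0 := by
    intro s hs
    obtain ⟨h0, h1, h2⟩ := alloc s hs
    have h3 := ir s hs
    have h4 := eq s hs
    rw [sigR_V2] at h4
    have h2' : 0 ≤ 1 - x s 0 - x s 1 := by linarith
    have k1 := mul_nonneg (a0 s) h1
    have k2 := mul_nonneg (b0 s) h0
    have k3 := mul_nonneg (a0 s) h2'
    have k4 := mul_nonneg (b0 s) h2'
    refine ⟨?_, ?_, ?_, ?_⟩ <;> nlinarith
  obtain ⟨s, hs, hsa⟩ : ∃ s ∈ S, 0 < σ u1 s := by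
    apply Finset.exists_lt_of_sum_lt
    simp [a1]
  obtain ⟨t, ht, htb⟩ : ∃ t ∈ S, 0 < σ u2 t := by
    apply Finset.exists_lt_of_sum_lt
    simp [b1]
  obtain ⟨k1, k2, k3, -⟩ := key s hs
  have x1 : x s 1 = 0 := by simpa [hsa.ne'] using k1
  have x0 : x s 0 = 1 := by
    have : 1 - x s 0 - x s 1 = 0 := by simpa [hsa.ne'] using k3
    linarith
  have sb : σ u2 s = 0 := by simpa [x0] using k2
  have qs : q s = 5 := by
    have := eq s hs
    rw [sigR_V2, sb] at this
    apply mul_left_cancel₀ hsa.ne'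
    linarith
  obtain ⟨l1, l2, -, l4⟩ := key t ht
  have y0 : x t 0 = 0 := by simpa [htb.ne'] using l2
  have y1 : x t 1 = 1 := by
    have : 1 - x t 0 - x t 1 = 0 := by simpa [htb.ne'] using l4
    linarith
  have ta : σ u1 t = 0 := by simpa [y1] using l1
  have qt : q t = 10 := by
    have := eq t ht
    rw [sigR_V2, ta] at this
    apply mul_left_cancel₀ htb.ne'
    linarith
  have := hC t ht (by rw [sigR_V2]; linarith) s hs
  simp only [Fin.sum_univ_two, post_V2, e10, e11, e20, e21, ta, x0, x1, y0, y1, qs, qt] at this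
  field_simp at this
  norm_num at this
  linarith

/-- in the instance `f(5,4) = f(9,10) = 1/2`, the optimal welfare is
`15/2`, no IC-IR mechanism extracts the full surplus, and the no-information mechanism
selling product 2 at price 7 is IC-IR with revenue 7. -/
theorem no_full_surplus_extraction :
    -- the optimal welfare equals 15/2
    (∑ v ∈ V2, f2 v * max (v 0) (v 1) = 15 / 2) ∧
    -- no IC-IR mechanism with a finite signal space has revenue 15/2
    (∀ (ι : Type) (S : Finset ι) (σ : (Fin 2 → ℝ) → ι → ℝ)
        (x : ι → Fin 2 → ℝ) (q : ι → ℝ),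
        IsInfo V2 S σ → IsAlloc S x → IC V2 f2 S σ x q → IR V2 f2 S σ x q →
        Rev V2 f2 S σ q ≠ 15 / 2) ∧
    -- the no-information mechanism selling product 2 at price 7 is IC-IR, revenue 7
    (IsInfo V2 ({()} : Finset Unit) σNoInfo ∧
      IsAlloc ({()} : Finset Unit) (fun _ => ![0, 1]) ∧
      IC V2 f2 ({()} : Finset Unit) σNoInfo (fun _ => ![0, 1]) (fun _ => 7) ∧
      IR V2 f2 ({()} : Finset Unit) σNoInfo (fun _ => ![0, 1]) (fun _ => 7) ∧
      Rev V2 f2 ({()} : Finset Unit) σNoInfo (fun _ => 7) = 7) := by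
  have e10 : u1 0 = 5 := rfl
  have e11 : u1 1 = 4 := rfl
  have e20 : u2 0 = 9 := rfl
  have e21 : u2 1 = 10 := rfl
  refine ⟨?_, no_extract, ?_, ?_, ?_, ?_, ?_⟩
  · rw [sum_V2 (fun v => max (v 0) (v 1))]
    norm_num [e10, e11, e20, e21]
  · intro v _
    simp [σNoInfo]
  · intro s _
    simp [Fin.forall_fin_two]
  · intro s _ _ s' _
    exact le_refl _
  · intro s _ _
    simp only [Fin.sum_univ_two, post_V2, e10, e11, e20, e21, σNoInfo]
    norm_num
  · simp only [Rev, sigR_V2, σNoInfo]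
    norm_num

end Screening
end
end
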